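/- arXiv:1908.00514 — 2 statements merged into one kernel-verified Lean document; each statement's English description precedes it below -/
import Mathlib

section
/- For all constants L > 0, γ > 1, μ > 0, ρ̄ > 0, ℓ₀ > 0, J̲ > 0, J̄ > 0, m₀ ≥ 0, P₀ ≥ 0, E₀ ≥ 0, K₀ ≥ 0, D₀ ≥ 0, T > 0 there exists a constant C > 0 with the following property. Let ρ₀ ∈ C¹([0,L]) with 0 < ρ₀ ≤ ρ̄, and let (J, v, π) be a sufficiently smooth classical solution of (E1)–(E3) on [0,L]×[0,T] with boundary condition v(0,t) = v(L,t) = 0, such that π₀ ≥ 0, ‖π₀‖_∞ ≤ P₀, J̲ ≤ J₀ ≤ J̄, ∫₀ᴸ J₀ dy = ℓ₀, ∫₀ᴸ ρ₀ dy = m₀, ∫₀ᴸ ( ρ₀ v₀²/2 + J₀ π₀/(γ−1) ) dy = E₀, ‖G₀‖₂ ≤ K₀ where G₀ := μ(∂_y v₀)/J₀ − π₀, and ‖∂_y J₀‖₂ + ‖∂_y π₀‖₂ ≤ D₀. Then the time-weighted estimate ∫₀ᵀ t ‖∂_y ∂_t v(·,t)‖₂² dt ≤ C holds. -/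
open Set MeasureTheory

/-- A classical solution `(J, v, π)` of the Lagrangian 1D non-heat-conductive compressible
Navier–Stokes system (E1)–(E3) on `[0,L] × [0,T]`, together with its partial derivatives
`Jt = ∂ₜJ`, `vy = ∂_y v`, `vt = ∂ₜv`, `w = ∂_y((∂_y v)/J)`, `πy = ∂_y π`, `πt = ∂ₜπ`,
all continuous on `[0,L] × [0,T]`, and `J > 0` everywhere. -/
structure ClassicalSolution (L T μ γ : ℝ) (ρ₀ : ℝ → ℝ)
    (J v π Jt vy vt w πy πt : ℝ → ℝ → ℝ) : Prop where
  Jpos : ∀ y ∈ Set.Icc (0:ℝ) L, ∀ t ∈ Set.Icc (0:ℝ) T, 0 < J y t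
  contJ : ContinuousOn (fun p : ℝ × ℝ => J p.1 p.2) (Set.Icc 0 L ×ˢ Set.Icc 0 T)
  contv : ContinuousOn (fun p : ℝ × ℝ => v p.1 p.2) (Set.Icc 0 L ×ˢ Set.Icc 0 T)
  contPi : ContinuousOn (fun p : ℝ × ℝ => π p.1 p.2) (Set.Icc 0 L ×ˢ Set.Icc 0 T)
  hJt : ∀ y ∈ Set.Icc (0:ℝ) L, ∀ t ∈ Set.Icc (0:ℝ) T,
    HasDerivWithinAt (fun s => J y s) (Jt y t) (Set.Icc 0 T) t
  hvy : ∀ y ∈ Set.Icc (0:ℝ) L, ∀ t ∈ Set.Icc (0:ℝ) T,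
    HasDerivWithinAt (fun x => v x t) (vy y t) (Set.Icc 0 L) y
  hvt : ∀ y ∈ Set.Icc (0:ℝ) L, ∀ t ∈ Set.Icc (0:ℝ) T,
    HasDerivWithinAt (fun s => v y s) (vt y t) (Set.Icc 0 T) t
  hw : ∀ y ∈ Set.Icc (0:ℝ) L, ∀ t ∈ Set.Icc (0:ℝ) T,
    HasDerivWithinAt (fun x => vy x t / J x t) (w y t) (Set.Icc 0 L) y
  hPiy : ∀ y ∈ Set.Icc (0:ℝ) L, ∀ t ∈ Set.Icc (0:ℝ) T,
    HasDerivWithinAt (fun x => π x t) (πy y t) (Set.Icc 0 L) y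
  hPit : ∀ y ∈ Set.Icc (0:ℝ) L, ∀ t ∈ Set.Icc (0:ℝ) T,
    HasDerivWithinAt (fun s => π y s) (πt y t) (Set.Icc 0 T) t
  contJt : ContinuousOn (fun p : ℝ × ℝ => Jt p.1 p.2) (Set.Icc 0 L ×ˢ Set.Icc 0 T)
  contvy : ContinuousOn (fun p : ℝ × ℝ => vy p.1 p.2) (Set.Icc 0 L ×ˢ Set.Icc 0 T)
  contvt : ContinuousOn (fun p : ℝ × ℝ => vt p.1 p.2) (Set.Icc 0 L ×ˢ Set.Icc 0 T)
  contw : ContinuousOn (fun p : ℝ × ℝ => w p.1 p.2) (Set.Icc 0 L ×ˢ Set.Icc 0 T)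
  contPiy : ContinuousOn (fun p : ℝ × ℝ => πy p.1 p.2) (Set.Icc 0 L ×ˢ Set.Icc 0 T)
  contPit : ContinuousOn (fun p : ℝ × ℝ => πt p.1 p.2) (Set.Icc 0 L ×ˢ Set.Icc 0 T)
  eq1 : ∀ y ∈ Set.Icc (0:ℝ) L, ∀ t ∈ Set.Icc (0:ℝ) T, Jt y t = vy y t
  eq2 : ∀ y ∈ Set.Icc (0:ℝ) L, ∀ t ∈ Set.Icc (0:ℝ) T,
    ρ₀ y * vt y t - μ * w y t + πy y t = 0
  eq3 : ∀ y ∈ Set.Icc (0:ℝ) L, ∀ t ∈ Set.Icc (0:ℝ) T,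
    πt y t + γ * (vy y t / J y t) * π y t = μ * (γ - 1) * (vy y t / J y t) ^ 2

/-!
The effective viscous flux `G = μ (∂_y v) / J - π` satisfies `∂_y G = ρ ∂ₜv`, so it has a potential
`Φ` with `∂ₜΦ = G` and `∂_y Φ = ρ v`. Conservation of length and energy controls the mean of `Φ`
and its oscillation in space, and `μ ∂ₜ log J = G + π ≥ ∂ₜΦ` bounds `J` from below.

The derivative of `∫ J G²` produces the dissipation `∫ ρ (∂ₜv)²`, which absorbs the remaining terms
through `sup G² ≤ δ ∫ ρ (∂ₜv)² + C ∫ J G²`; the Grönwall inequality bounds `∫ J G²` and the time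
integrals of the dissipation and of `sup G²`. The latter bounds `π` and `J` from above.

Finally `d/dt ∫ ρ (∂ₜv)² = -2 ∫ ∂_y∂ₜv ∂ₜG`, whose leading part is `-2μ ∫ (∂_y∂ₜv)² / J`.
Multiplying by `t` removes the initial value of the dissipation, which the data do not control.
-/

/-! ### Calculus on a rectangle -/

section Calculus

open Function intervalIntegral

variable {a b c d t : ℝ}

lemma le_of_sSup_abs_le {X : Type*} [TopologicalSpace X] {s : Set X} {f : X → ℝ} {P : ℝ} {x : X}
    (hs : IsCompact s) (hf : ContinuousOn f s) (hP : sSup ((fun y => |f y|) '' s) ≤ P)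
    (hx : x ∈ s) : f x ≤ P :=
  (le_abs_self _).trans <| (le_csSup (hs.bddAbove_image hf.abs) (mem_image_of_mem _ hx)).trans hP

lemma integral_congr_Icc {f g : ℝ → ℝ} (hab : a ≤ b) (h : ∀ y ∈ Icc a b, f y = g y) :
    ∫ y in a..b, f y = ∫ y in a..b, g y :=
  integral_congr <| uIcc_of_le hab ▸ h

lemma integral_eq_zero_of_hasDerivAt {f f' : ℝ → ℝ} (hab : a ≤ b) (hf : ContinuousOn f (Icc a b))
    (hderiv : ∀ x ∈ Ioo a b, HasDerivAt f (f' x) x) (hf' : IntervalIntegrable f' volume a b)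
    (hfa : f a = 0) (hfb : f b = 0) : ∫ x in a..b, f' x = 0 := by
  rw [integral_eq_sub_of_hasDerivAt_of_le hab hf hderiv hf', hfa, hfb, sub_zero]

lemma integral_mono_of_continuous {f g : ℝ → ℝ} (hab : a ≤ b) (hf : Continuous f)
    (hg : Continuous g) (hle : ∀ x ∈ Icc a b, f x ≤ g x) :
    ∫ x in a..b, f x ≤ ∫ x in a..b, g x :=
  integral_mono_on hab (hf.intervalIntegrable a b) (hg.intervalIntegrable a b) hle

lemma le_add_integral_of_hasDerivAt_le {f f' g : ℝ → ℝ} (hf : ContinuousOn f (Icc a b))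
    (hderiv : ∀ s ∈ Ioo a b, HasDerivAt f (f' s) s) (hg : Continuous g)
    (hle : ∀ s ∈ Ioo a b, f' s ≤ g s) (ht : t ∈ Icc a b) :
    f t ≤ f a + ∫ s in a..t, g s := by
  have hsub : Ioo a t ⊆ Ioo a b := Ioo_subset_Ioo_right ht.2
  have := sub_le_integral_of_hasDeriv_right_of_le ht.1 (hf.mono (Icc_subset_Icc_right ht.2))
    (fun s hs => (hderiv s (hsub hs)).hasDerivWithinAt) hg.integrableOn_Icc
    (fun s hs => hle s (hsub hs))
  linarith

lemma eq_of_hasDerivAt_zero {f : ℝ → ℝ} (hf : ContinuousOn f (Icc a b))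
    (hderiv : ∀ s ∈ Ioo a b, HasDerivAt f 0 s) (ht : t ∈ Icc a b) : f t = f a := by
  have := integral_eq_sub_of_hasDerivAt_of_le ht.1 (hf.mono (Icc_subset_Icc_right ht.2))
    (fun s hs => hderiv s (Ioo_subset_Ioo_right ht.2 hs)) intervalIntegrable_const
  rw [intervalIntegral.integral_zero] at this
  linarith

lemma sub_eq_mul_integral_of_hasDerivAt {f f' : ℝ → ℝ} {s : ℝ}
    (hderiv : ∀ r ∈ Ioo c d, HasDerivAt f (f' r) r) (hf' : Continuous f')
    (hs : s ∈ Ioo c d) (ht : t ∈ Ioo c d) :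
    f s - f t = (s - t) * ∫ θ in (0 : ℝ)..1, f' (t + θ * (s - t)) := by
  have hmem : ∀ θ ∈ Icc (0 : ℝ) 1, t + θ * (s - t) ∈ Ioo c d := fun θ hθ => by
    simpa using (convex_Ioo c d).add_smul_sub_mem ht hs hθ
  have := integral_unitInterval_deriv_eq_sub (z₀ := t) (z₁ := s - t)
    (by fun_prop) (fun θ hθ => hderiv _ (hmem θ hθ))
  simpa using this.symm

-- The factor `h y s - h y t` vanishes at `s = t`, so no derivative of `k` enters.
lemma hasDerivAt_integral_sub_mul {h h' k : ℝ → ℝ → ℝ} (hab : a ≤ b) (ht : t ∈ Ioo c d)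
    (hderiv : ∀ y ∈ Ioo a b, ∀ s ∈ Ioo c d, HasDerivAt (h y) (h' y s) s)
    (hh' : Continuous (uncurry h')) (hk : Continuous (uncurry k)) :
    HasDerivAt (fun s => ∫ y in a..b, (h y s - h y t) * k y s)
      (∫ y in a..b, h' y t * k y t) t := by
  let q : ℝ → ℝ := fun s => ∫ y in a..b, (∫ θ in (0 : ℝ)..1, h' y (t + θ * (s - t))) * k y s
  have hslope : ∀ s ∈ Ioo c d, ∫ y in a..b, (h y s - h y t) * k y s = (s - t) * q s := by
    intro s hs
    rw [← intervalIntegral.integral_const_mul]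
    refine integral_congr_Ioo_of_le hab fun y hy => ?_
    simp only [sub_eq_mul_integral_of_hasDerivAt (hderiv y hy) (by fun_prop) hs ht, mul_assoc]
  have hq : Continuous q := by
    have : Continuous fun z : ℝ × ℝ => ∫ θ in (0 : ℝ)..1, h' z.2 (t + θ * (z.1 - t)) :=
      continuous_parametric_intervalIntegral_of_continuous' (by fun_prop) 0 1
    exact continuous_parametric_intervalIntegral_of_continuous' (by fun_prop) a b
  have hqt : q t = ∫ y in a..b, h' y t * k y t := by simp [q]
  rw [← hqt, hasDerivAt_iff_tendsto_slope]
  refine ((hq.tendsto t).mono_left nhdsWithin_le_nhds).congr' ?_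
  filter_upwards [nhdsWithin_le_nhds (Ioo_mem_nhds ht.1 ht.2), self_mem_nhdsWithin] with s hs hne
  have : s - t ≠ 0 := sub_ne_zero.mpr hne
  simp [slope_def_field, hslope s hs, this]

lemma hasDerivAt_integral_param {f f' : ℝ → ℝ → ℝ} (hab : a ≤ b) (ht : t ∈ Ioo c d)
    (hderiv : ∀ y ∈ Ioo a b, ∀ s ∈ Ioo c d, HasDerivAt (f y) (f' y s) s)
    (hf : Continuous (uncurry f)) (hf' : Continuous (uncurry f')) :
    HasDerivAt (fun s => ∫ y in a..b, f y s) (∫ y in a..b, f' y t) t := by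
  have h := (hasDerivAt_integral_sub_mul (k := fun _ _ => 1) hab ht hderiv hf'
    continuous_const).add_const (∫ y in a..b, f y t)
  have h_integrable : ∀ s, IntervalIntegrable (fun y => f y s) volume a b := fun s =>
    Continuous.intervalIntegrable (by fun_prop) a b
  simpa [integral_sub (h_integrable _) (h_integrable t)] using h

lemma hasDerivAt_partial_comm {f fx ft ftx : ℝ → ℝ → ℝ} {x : ℝ}
    (hfx : ∀ x ∈ Ioo a b, ∀ t ∈ Ioo c d, HasDerivAt (fun x => f x t) (fx x t) x)
    (hft : ∀ x ∈ Ioo a b, ∀ t ∈ Ioo c d, HasDerivAt (f x) (ft x t) t)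
    (hftx : ∀ x ∈ Ioo a b, ∀ t ∈ Ioo c d, HasDerivAt (fun x => ft x t) (ftx x t) x)
    (hcont_ft : Continuous (uncurry ft)) (hcont_ftx : Continuous (uncurry ftx))
    (hx : x ∈ Ioo a b) (ht : t ∈ Ioo c d) : HasDerivAt (fx x) (ftx x t) t := by
  obtain ⟨t₀, hct₀, ht₀t⟩ := exists_between ht.1
  have hincr : ∀ s ∈ Ioo t₀ d, fx x t₀ + ∫ r in t₀..s, ftx x r = fx x s := by
    intro s hs
    have hsub : uIcc t₀ s ⊆ Ioo c d := by
      rw [uIcc_of_le hs.1.le]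
      exact Icc_subset_Ioo hct₀ hs.2
    have hprim : ∀ x ∈ Ioo a b, ∫ r in t₀..s, ft x r = f x s - f x t₀ := fun x hx =>
      integral_eq_sub_of_hasDerivAt (fun r hr => hft x hx r (hsub hr))
        (Continuous.intervalIntegrable (by fun_prop) t₀ s)
    have hdiff : HasDerivAt (fun x => ∫ r in t₀..s, ft x r) (fx x s - fx x t₀) x :=
      ((hfx x hx s (hsub right_mem_uIcc)).sub (hfx x hx t₀ (hsub left_mem_uIcc))
        ).congr_of_eventuallyEq (Filter.eventually_of_mem (Ioo_mem_nhds hx.1 hx.2) hprim)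
    have hleibniz := hasDerivAt_integral_param (f := fun r x => ft x r) (f' := fun r x => ftx x r)
      hs.1.le hx
      (fun r hr x hx => hftx x hx r (hsub (Ioo_subset_Icc_self.trans Icc_subset_uIcc hr)))
      (by fun_prop) (by fun_prop)
    linarith [hdiff.unique hleibniz]
  have hftc : HasDerivAt (fun s => fx x t₀ + ∫ r in t₀..s, ftx x r) (ftx x t) t :=
    (Continuous.integral_hasStrictDerivAt (by fun_prop) t₀ t).hasDerivAt.const_add _
  exact hftc.congr_of_eventuallyEq
    (Filter.eventually_of_mem (Ioo_mem_nhds ht₀t ht.2) fun s hs => (hincr s hs).symm)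

lemma abs_sub_le_integral_abs_deriv {f f' : ℝ → ℝ} {x z : ℝ} (hf : ContinuousOn f (Icc a b))
    (hderiv : ∀ x ∈ Ioo a b, HasDerivAt f (f' x) x) (hf' : Continuous f')
    (hx : x ∈ Icc a b) (hz : z ∈ Icc a b) : |f x - f z| ≤ ∫ y in a..b, |f' y| := by
  wlog hzx : z ≤ x generalizing x z
  · rw [abs_sub_comm]
    exact this hz hx (le_of_not_ge hzx)
  rw [← integral_eq_sub_of_hasDerivAt_of_le hzx (hf.mono (Icc_subset_Icc hz.1 hx.2))
    (fun y hy => hderiv y (Ioo_subset_Ioo hz.1 hx.2 hy)) (hf'.intervalIntegrable z x)]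
  exact (abs_integral_le_integral_abs hzx).trans <|
    integral_mono_interval hz.1 hzx hx.2 (ae_of_all _ fun y => abs_nonneg (f' y))
      (hf'.abs.intervalIntegrable a b)

lemma le_average_add_integral_abs_deriv {f f' : ℝ → ℝ} {x : ℝ} (hab : a < b)
    (hf : ContinuousOn f (Icc a b)) (hderiv : ∀ x ∈ Ioo a b, HasDerivAt f (f' x) x)
    (hf' : Continuous f') (hx : x ∈ Icc a b) :
    f x ≤ (∫ y in a..b, f y) / (b - a) + ∫ y in a..b, |f' y| := by
  obtain ⟨z, hz, hfz⟩ := exists_eq_interval_average hab.ne (uIcc_of_le hab.le ▸ hf)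
  rw [interval_average_eq_div] at hfz
  have hz : z ∈ Icc a b := Ioo_subset_Icc_self (uIoo_of_le hab.le ▸ hz)
  linarith [le_of_abs_le (abs_sub_le_integral_abs_deriv hf hderiv hf' hx hz)]

lemma add_integral_le_exp_mul_of_hasDerivAt_le {f f' D : ℝ → ℝ} {K : ℝ} (hK : 0 ≤ K)
    (hf : Continuous f) (hD : Continuous D) (hD0 : ∀ s, 0 ≤ D s)
    (hderiv : ∀ s ∈ Ioo 0 b, HasDerivAt f (f' s) s)
    (hle : ∀ s ∈ Ioo 0 b, f' s ≤ K * f s - D s) (ht : t ∈ Icc 0 b) :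
    f t + ∫ s in 0..t, D s ≤ Real.exp (K * t) * f 0 := by
  let F : ℝ → ℝ := fun s => f s + ∫ r in 0..s, D r
  have hDint : ∀ s, HasDerivAt (fun s => ∫ r in 0..s, D r) (D s) s := fun s =>
    (hD.integral_hasStrictDerivAt 0 s).hasDerivAt
  have hF : ∀ s ∈ Ioo 0 b, HasDerivAt (fun s => Real.exp (-(K * s)) * F s)
      (Real.exp (-(K * s)) * (f' s + D s - K * F s)) s := by
    intro s hs
    have hexp : HasDerivAt (fun s => Real.exp (-(K * s))) (Real.exp (-(K * s)) * -K) s := by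
      simpa using (((hasDerivAt_id s).const_mul K).neg).exp
    refine (hexp.mul ((hderiv s hs).add (hDint s))).congr_deriv ?_
    simp only [F, Pi.add_apply]
    ring
  have hF_le : ∀ s ∈ Ioo 0 b, Real.exp (-(K * s)) * (f' s + D s - K * F s) ≤ 0 := by
    intro s hs
    have : 0 ≤ K * ∫ r in 0..s, D r :=
      mul_nonneg hK (integral_nonneg hs.1.le fun r _ => hD0 r)
    refine mul_nonpos_of_nonneg_of_nonpos (Real.exp_nonneg _) ?_
    simp only [F]
    linarith [hle s hs]
  have hF_cont : Continuous fun s => Real.exp (-(K * s)) * F s := by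
    have : Continuous fun s => ∫ r in 0..s, D r :=
      continuous_iff_continuousAt.mpr fun s => (hDint s).continuousAt
    fun_prop
  have h := le_add_integral_of_hasDerivAt_le hF_cont.continuousOn hF continuous_const hF_le ht
  simp only [F, intervalIntegral.integral_zero, integral_same, mul_zero, neg_zero, Real.exp_zero,
    add_zero, one_mul, Real.exp_neg] at h
  rwa [inv_mul_le_iff₀ (Real.exp_pos _)] at h

end Calculus

/-! ### Extension from a rectangle to the plane -/

section Extension

open Function

variable {L T y t : ℝ} {f g g' : ℝ → ℝ → ℝ}

/-- The extension of `f` from the rectangle `[0, L] × [0, T]` to the plane, constant along the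
fibres of the nearest-point projection. It makes sections continuous on the whole line while
leaving values on the rectangle and derivatives in its interior unchanged. -/
noncomputable def rectExtend (hL : 0 ≤ L) (hT : 0 ≤ T) (f : ℝ → ℝ → ℝ) (y t : ℝ) : ℝ :=
  f (projIcc 0 L hL y) (projIcc 0 T hT t)

lemma rectExtend_of_mem (hL : 0 ≤ L) (hT : 0 ≤ T) (hy : y ∈ Icc 0 L) (ht : t ∈ Icc 0 T) :
    rectExtend hL hT f y t = f y t := by
  simp [rectExtend, projIcc_of_mem _ hy, projIcc_of_mem _ ht]

lemma continuous_rectExtend (hL : 0 ≤ L) (hT : 0 ≤ T)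
    (hf : ContinuousOn (fun p : ℝ × ℝ => f p.1 p.2) (Icc 0 L ×ˢ Icc 0 T)) :
    Continuous (uncurry (rectExtend hL hT f)) :=
  hf.comp_continuous (f := fun p : ℝ × ℝ => ((projIcc 0 L hL p.1 : ℝ), (projIcc 0 T hT p.2 : ℝ)))
    (by fun_prop) fun _ => ⟨Subtype.coe_prop _, Subtype.coe_prop _⟩

lemma hasDerivAt_rectExtend_fst (hL : 0 ≤ L) (hT : 0 ≤ T)
    (hf : ∀ y ∈ Icc 0 L, ∀ t ∈ Icc 0 T, HasDerivWithinAt (fun x => g x t) (g' y t) (Icc 0 L) y)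
    (hy : y ∈ Ioo 0 L) (ht : t ∈ Icc 0 T) :
    HasDerivAt (fun x => rectExtend hL hT g x t) (rectExtend hL hT g' y t) y := by
  rw [rectExtend_of_mem hL hT (Ioo_subset_Icc_self hy) ht]
  exact ((hf y (Ioo_subset_Icc_self hy) t ht).hasDerivAt (Icc_mem_nhds hy.1 hy.2)
    ).congr_of_eventuallyEq <| Filter.eventually_of_mem (Icc_mem_nhds hy.1 hy.2) fun x hx =>
      rectExtend_of_mem hL hT hx ht

lemma hasDerivAt_rectExtend_snd (hL : 0 ≤ L) (hT : 0 ≤ T)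
    (hf : ∀ y ∈ Icc 0 L, ∀ t ∈ Icc 0 T, HasDerivWithinAt (fun s => g y s) (g' y t) (Icc 0 T) t)
    (hy : y ∈ Icc 0 L) (ht : t ∈ Ioo 0 T) :
    HasDerivAt (rectExtend hL hT g y) (rectExtend hL hT g' y t) t := by
  rw [rectExtend_of_mem hL hT hy (Ioo_subset_Icc_self ht)]
  exact ((hf y hy t (Ioo_subset_Icc_self ht)).hasDerivAt (Icc_mem_nhds ht.1 ht.2)
    ).congr_of_eventuallyEq <| Filter.eventually_of_mem (Icc_mem_nhds ht.1 ht.2) fun s hs =>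
      rectExtend_of_mem hL hT hy hs

end Extension

/-! ### Solutions and the effective viscous flux -/

section Solution

open Function intervalIntegral

/-- A solution of the system whose unknowns and derivatives are continuous on the whole plane,
the equations holding on the closed rectangle `[0, L] × [0, T]` up to the parts of the boundary
where a two-sided derivative makes no sense. Here `vy`, `vt`, `vty` are `∂_y v`, `∂ₜ v`,
`∂_y ∂ₜ v`; the density `ρ` may vanish. -/
structure ExtendedSolution (L T μ γ : ℝ) where
  ρ : ℝ → ℝ
  J : ℝ → ℝ → ℝ
  v : ℝ → ℝ → ℝ
  π : ℝ → ℝ → ℝ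
  vy : ℝ → ℝ → ℝ
  vt : ℝ → ℝ → ℝ
  vty : ℝ → ℝ → ℝ
  L_pos : 0 < L
  T_pos : 0 < T
  μ_pos : 0 < μ
  one_lt_γ : 1 < γ
  continuous_ρ : Continuous ρ
  continuous_J : Continuous (uncurry J)
  continuous_v : Continuous (uncurry v)
  continuous_π : Continuous (uncurry π)
  continuous_vy : Continuous (uncurry vy)
  continuous_vt : Continuous (uncurry vt)
  continuous_vty : Continuous (uncurry vty)
  ρ_nonneg : ∀ y, 0 ≤ ρ y
  J_pos : ∀ y t, 0 < J y t
  π_zero_nonneg : ∀ y ∈ Icc 0 L, 0 ≤ π y 0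
  hasDerivAt_J : ∀ y ∈ Icc 0 L, ∀ t ∈ Ioo 0 T, HasDerivAt (J y) (vy y t) t
  hasDerivAt_v : ∀ y ∈ Icc 0 L, ∀ t ∈ Ioo 0 T, HasDerivAt (v y) (vt y t) t
  hasDerivAt_π' : ∀ y ∈ Icc 0 L, ∀ t ∈ Ioo 0 T, HasDerivAt (π y)
    (μ * (γ - 1) * (vy y t / J y t) ^ 2 - γ * (vy y t / J y t) * π y t) t
  hasDerivAt_v_space : ∀ y ∈ Ioo 0 L, ∀ t ∈ Icc 0 T, HasDerivAt (fun x => v x t) (vy y t) y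
  hasDerivAt_vt_space : ∀ y ∈ Ioo 0 L, ∀ t ∈ Icc 0 T, HasDerivAt (fun x => vt x t) (vty y t) y
  hasDerivAt_flux : ∀ y ∈ Ioo 0 L, ∀ t ∈ Icc 0 T,
    HasDerivAt (fun x => μ * (vy x t / J x t) - π x t) (ρ y * vt y t) y
  v_left : ∀ t ∈ Icc 0 T, v 0 t = 0
  v_right : ∀ t ∈ Icc 0 T, v L t = 0

namespace ExtendedSolution

attribute [fun_prop] continuous_ρ continuous_J continuous_v continuous_π continuous_vy
  continuous_vt continuous_vty

variable {L T μ γ : ℝ} (S : ExtendedSolution L T μ γ) {y t : ℝ}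

lemma J_ne_zero (y t : ℝ) : S.J y t ≠ 0 := (S.J_pos y t).ne'

/-- The effective viscous flux `G = μ (∂_y v) / J - π`; its space derivative is `ρ ∂ₜv`. -/
noncomputable def G (y t : ℝ) : ℝ := μ * (S.vy y t / S.J y t) - S.π y t

/-- The time derivative of the effective viscous flux. -/
noncomputable def Gt (y t : ℝ) : ℝ := (μ * S.vty y t - γ * S.vy y t * S.G y t) / S.J y t

@[fun_prop]
lemma continuous_G : Continuous (uncurry S.G) := by
  unfold G uncurry
  fun_prop (disch := exact fun _ => S.J_ne_zero _ _)

@[fun_prop]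
lemma continuous_Gt : Continuous (uncurry S.Gt) := by
  unfold Gt uncurry
  fun_prop (disch := exact fun _ => S.J_ne_zero _ _)

lemma vy_eq (y t : ℝ) : S.vy y t = S.J y t * (S.G y t + S.π y t) / μ := by
  have := S.J_ne_zero y t
  have := S.μ_pos.ne'
  unfold G
  field_simp
  ring

lemma hasDerivAt_π (hy : y ∈ Icc 0 L) (ht : t ∈ Ioo 0 T) : HasDerivAt (S.π y)
    (((γ - 1) * S.G y t ^ 2 + (γ - 2) * S.G y t * S.π y t - S.π y t ^ 2) / μ) t := by
  refine (S.hasDerivAt_π' y hy t ht).congr_deriv ?_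
  have := S.J_ne_zero y t
  have := S.μ_pos.ne'
  rw [S.vy_eq]
  field_simp
  ring

lemma hasDerivAt_G_space (hy : y ∈ Ioo 0 L) (ht : t ∈ Icc 0 T) :
    HasDerivAt (fun x => S.G x t) (S.ρ y * S.vt y t) y :=
  S.hasDerivAt_flux y hy t ht

lemma hasDerivAt_vy (hy : y ∈ Ioo 0 L) (ht : t ∈ Ioo 0 T) :
    HasDerivAt (S.vy y) (S.vty y t) t :=
  hasDerivAt_partial_comm
    (fun x hx s hs => S.hasDerivAt_v_space x hx s (Ioo_subset_Icc_self hs))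
    (fun x hx s hs => S.hasDerivAt_v x (Ioo_subset_Icc_self hx) s hs)
    (fun x hx s hs => S.hasDerivAt_vt_space x hx s (Ioo_subset_Icc_self hs))
    S.continuous_vt S.continuous_vty hy ht

lemma hasDerivAt_G (hy : y ∈ Ioo 0 L) (ht : t ∈ Ioo 0 T) : HasDerivAt (S.G y) (S.Gt y t) t := by
  have hyI := Ioo_subset_Icc_self hy
  refine ((((S.hasDerivAt_vy hy ht).div (S.hasDerivAt_J y hyI t ht) (S.J_ne_zero y t)).const_mul
    μ).sub (S.hasDerivAt_π hyI ht)).congr_deriv ?_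
  have := S.J_ne_zero y t
  have := S.μ_pos.ne'
  rw [Gt, S.vy_eq]
  field_simp
  ring

lemma vt_left (ht : t ∈ Ioo 0 T) : S.vt 0 t = 0 :=
  (S.hasDerivAt_v 0 (left_mem_Icc.2 S.L_pos.le) t ht).unique <|
    (hasDerivAt_const t (0 : ℝ)).congr_of_eventuallyEq <|
      Filter.eventually_of_mem (Icc_mem_nhds ht.1 ht.2) S.v_left

lemma vt_right (ht : t ∈ Ioo 0 T) : S.vt L t = 0 :=
  (S.hasDerivAt_v L (right_mem_Icc.2 S.L_pos.le) t ht).unique <|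
    (hasDerivAt_const t (0 : ℝ)).congr_of_eventuallyEq <|
      Filter.eventually_of_mem (Icc_mem_nhds ht.1 ht.2) S.v_right

lemma π_nonneg (hy : y ∈ Icc 0 L) (ht : t ∈ Icc 0 T) : 0 ≤ S.π y t := by
  have hcont : Continuous fun s => -(S.J y s ^ γ * S.π y s) := by
    have : Continuous fun s => S.J y s ^ γ :=
      Continuous.rpow_const (by fun_prop) fun s => Or.inl (S.J_ne_zero y s)
    fun_prop
  have hderiv : ∀ s ∈ Ioo 0 T, HasDerivAt (fun s => -(S.J y s ^ γ * S.π y s))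
      (-(S.J y s ^ γ * ((γ - 1) / μ * (S.G y s + S.π y s) ^ 2))) s := by
    intro s hs
    have hJ := S.J_ne_zero y s
    refine (((S.hasDerivAt_J y hy s hs).rpow_const (p := γ) (Or.inl hJ)).mul
      (S.hasDerivAt_π hy hs)).neg.congr_deriv ?_
    have := S.μ_pos.ne'
    rw [Real.rpow_sub_one hJ, S.vy_eq]
    field_simp
    ring
  have hle : ∀ s ∈ Ioo 0 T, -(S.J y s ^ γ * ((γ - 1) / μ * (S.G y s + S.π y s) ^ 2)) ≤ 0 := by
    intro s _
    have := S.J_pos y s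
    have := S.μ_pos
    have := sub_pos.2 S.one_lt_γ
    exact neg_nonpos.2 (by positivity)
  have hmono := le_add_integral_of_hasDerivAt_le hcont.continuousOn hderiv continuous_const hle ht
  have h_start : 0 ≤ S.J y 0 ^ γ * S.π y 0 :=
    mul_nonneg (Real.rpow_nonneg (S.J_pos y 0).le _) (S.π_zero_nonneg y hy)
  rw [intervalIntegral.integral_zero] at hmono
  exact nonneg_of_mul_nonneg_right (by linarith) (Real.rpow_pos_of_pos (S.J_pos y t) γ)

/-! ### Conservation laws -/

/-- The length `∫ J dy` of the fluid domain in Eulerian coordinates. -/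
noncomputable def length (t : ℝ) : ℝ := ∫ y in 0..L, S.J y t

/-- The total mass `∫ ρ dy`. -/
noncomputable def mass : ℝ := ∫ y in 0..L, S.ρ y

/-- The total energy `∫ (ρ v² / 2 + J π / (γ - 1)) dy`, kinetic plus internal. -/
noncomputable def energy (t : ℝ) : ℝ :=
  ∫ y in 0..L, (S.ρ y * S.v y t ^ 2 / 2 + S.J y t * S.π y t / (γ - 1))

lemma integral_vy_eq_zero (ht : t ∈ Icc 0 T) : ∫ y in 0..L, S.vy y t = 0 :=
  integral_eq_zero_of_hasDerivAt S.L_pos.le (f := fun y => S.v y t) (by fun_prop)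
    (fun y hy => S.hasDerivAt_v_space y hy t ht) (Continuous.intervalIntegrable (by fun_prop) _ _)
    (S.v_left t ht) (S.v_right t ht)

lemma length_eq (ht : t ∈ Icc 0 T) : S.length t = S.length 0 := by
  refine eq_of_hasDerivAt_zero (Continuous.continuousOn ?_) (fun s hs => ?_) ht
  · exact continuous_parametric_intervalIntegral_of_continuous' (by fun_prop) 0 L
  · rw [← S.integral_vy_eq_zero (Ioo_subset_Icc_self hs)]
    exact hasDerivAt_integral_param S.L_pos.le hs
      (fun y hy => S.hasDerivAt_J y (Ioo_subset_Icc_self hy)) S.continuous_J S.continuous_vy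

lemma energy_eq (ht : t ∈ Icc 0 T) : S.energy t = S.energy 0 := by
  refine eq_of_hasDerivAt_zero (Continuous.continuousOn ?_) (fun s hs => ?_) ht
  · exact continuous_parametric_intervalIntegral_of_continuous' (by fun_prop) 0 L
  have hsI := Ioo_subset_Icc_self hs
  have hparts : ∫ y in 0..L, (S.vy y s * S.G y s + S.v y s * (S.ρ y * S.vt y s)) = 0 :=
    integral_eq_zero_of_hasDerivAt S.L_pos.le (f := fun y => S.v y s * S.G y s) (by fun_prop)
      (fun y hy => (S.hasDerivAt_v_space y hy s hsI).mul (S.hasDerivAt_G_space hy hsI))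
      (Continuous.intervalIntegrable (by fun_prop) _ _)
      (by simp [S.v_left s hsI]) (by simp [S.v_right s hsI])
  rw [← hparts]
  refine hasDerivAt_integral_param
    (f := fun y t => S.ρ y * S.v y t ^ 2 / 2 + S.J y t * S.π y t / (γ - 1))
    (f' := fun y t => S.vy y t * S.G y t + S.v y t * (S.ρ y * S.vt y t))
    S.L_pos.le hs (fun y hy s hs => ?_) (by fun_prop) (by fun_prop)
  have hyI := Ioo_subset_Icc_self hy
  refine (((((S.hasDerivAt_v y hyI s hs).pow 2).const_mul (S.ρ y)).div_const 2).add
    (((S.hasDerivAt_J y hyI s hs).mul (S.hasDerivAt_π hyI hs)).div_const (γ - 1))).congr_deriv ?_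
  have := S.μ_pos.ne'
  have := (sub_pos.2 S.one_lt_γ).ne'
  rw [S.vy_eq]
  field_simp
  ring

lemma J_mul_π_nonneg (hy : y ∈ Icc 0 L) (ht : t ∈ Icc 0 T) : 0 ≤ S.J y t * S.π y t :=
  mul_nonneg (S.J_pos y t).le (S.π_nonneg hy ht)

lemma integral_ρ_mul_v_sq_le (ht : t ∈ Icc 0 T) :
    ∫ y in 0..L, S.ρ y * S.v y t ^ 2 ≤ 2 * S.energy 0 := by
  rw [← S.energy_eq ht, energy, ← intervalIntegral.integral_const_mul]
  refine integral_mono_of_continuous S.L_pos.le (by fun_prop) (by fun_prop) fun y hy => ?_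
  have := div_nonneg (S.J_mul_π_nonneg hy ht) (sub_pos.2 S.one_lt_γ).le
  linarith

lemma integral_J_mul_π_le (ht : t ∈ Icc 0 T) :
    ∫ y in 0..L, S.J y t * S.π y t ≤ (γ - 1) * S.energy 0 := by
  rw [← S.energy_eq ht, energy, ← intervalIntegral.integral_const_mul]
  refine integral_mono_of_continuous S.L_pos.le (by fun_prop) (by fun_prop) fun y _ => ?_
  have hγ := sub_pos.2 S.one_lt_γ
  have := S.ρ_nonneg y
  have hkin : 0 ≤ (γ - 1) * (S.ρ y * S.v y t ^ 2 / 2) := by positivity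
  rw [mul_add, mul_div_cancel₀ _ hγ.ne']
  linarith

lemma energy_zero_nonneg : 0 ≤ S.energy 0 := by
  have := S.integral_ρ_mul_v_sq_le (left_mem_Icc.2 S.T_pos.le)
  have : 0 ≤ ∫ y in 0..L, S.ρ y * S.v y 0 ^ 2 := integral_nonneg S.L_pos.le fun y _ =>
    mul_nonneg (S.ρ_nonneg y) (sq_nonneg _)
  linarith

lemma length_zero_pos : 0 < S.length 0 :=
  intervalIntegral_pos_of_pos (Continuous.intervalIntegrable (by fun_prop) _ _)
    (fun y => S.J_pos y 0) S.L_pos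

/-! ### Lower bound for `J` -/

/-- A potential `Φ` of the flux: `∂ₜΦ = G` and `∂_y Φ = ρ v`, consistently with `∂_y G = ρ ∂ₜv`. -/
noncomputable def Φ (y t : ℝ) : ℝ := (∫ s in 0..t, S.G 0 s) + ∫ x in 0..y, S.ρ x * S.v x t

@[fun_prop]
lemma continuous_Φ : Continuous (uncurry S.Φ) := by
  have hG : Continuous (S.G 0) := by fun_prop
  unfold Φ uncurry
  refine .add ?_ ?_
  · exact (continuous_primitive hG.intervalIntegrable 0).comp continuous_snd
  · refine continuous_parametric_intervalIntegral_of_continuous (μ := volume)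
      (f := fun (p : ℝ × ℝ) x => S.ρ x * S.v x p.2) ?_ continuous_fst
    unfold uncurry
    fun_prop

lemma hasDerivAt_Φ_space (y t : ℝ) : HasDerivAt (fun x => S.Φ x t) (S.ρ y * S.v y t) y :=
  (Continuous.integral_hasStrictDerivAt (by fun_prop) 0 y).hasDerivAt.const_add _

lemma hasDerivAt_Φ (hy : y ∈ Icc 0 L) (ht : t ∈ Ioo 0 T) : HasDerivAt (S.Φ y) (S.G y t) t := by
  have htI := Ioo_subset_Icc_self ht
  have hmom : ∫ x in 0..y, S.ρ x * S.vt x t = S.G y t - S.G 0 t :=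
    integral_eq_sub_of_hasDerivAt_of_le hy.1 (Continuous.continuousOn (by fun_prop))
      (fun x hx => S.hasDerivAt_G_space (Ioo_subset_Ioo_right hy.2 hx) htI)
      (Continuous.intervalIntegrable (by fun_prop) _ _)
  have hleft : HasDerivAt (fun t => ∫ s in 0..t, S.G 0 s) (S.G 0 t) t :=
    (Continuous.integral_hasStrictDerivAt (by fun_prop) 0 t).hasDerivAt
  have hright := hasDerivAt_integral_param (f := fun x t => S.ρ x * S.v x t)
    (f' := fun x t => S.ρ x * S.vt x t) hy.1 ht
    (fun x hx s hs => (S.hasDerivAt_v x ⟨hx.1.le, hx.2.le.trans hy.2⟩ s hs).const_mul (S.ρ x))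
    (by fun_prop) (by fun_prop)
  refine (hleft.add hright).congr_deriv ?_
  rw [hmom]
  ring

lemma integral_abs_ρ_mul_v_le (ht : t ∈ Icc 0 T) :
    ∫ y in 0..L, |S.ρ y * S.v y t| ≤ S.mass / 2 + S.energy 0 := by
  calc ∫ y in 0..L, |S.ρ y * S.v y t|
      ≤ ∫ y in 0..L, (S.ρ y + S.ρ y * S.v y t ^ 2) / 2 := by
        refine integral_mono_of_continuous S.L_pos.le (by fun_prop) (by fun_prop) fun y _ => ?_
        rw [abs_mul, abs_of_nonneg (S.ρ_nonneg y), ← sq_abs (S.v y t)]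
        nlinarith [mul_nonneg (S.ρ_nonneg y) (sq_nonneg (|S.v y t| - 1))]
    _ = S.mass / 2 + (∫ y in 0..L, S.ρ y * S.v y t ^ 2) / 2 := by
        rw [intervalIntegral.integral_div, intervalIntegral.integral_add
          (Continuous.intervalIntegrable (by fun_prop) _ _)
          (Continuous.intervalIntegrable (by fun_prop) _ _), mass, add_div]
    _ ≤ S.mass / 2 + S.energy 0 := by linarith [S.integral_ρ_mul_v_sq_le ht]

lemma abs_Φ_sub_Φ_le {z : ℝ} (hy : y ∈ Icc 0 L) (hz : z ∈ Icc 0 L) (ht : t ∈ Icc 0 T) :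
    |S.Φ y t - S.Φ z t| ≤ S.mass / 2 + S.energy 0 :=
  (abs_sub_le_integral_abs_deriv (f := fun x => S.Φ x t) (Continuous.continuousOn (by fun_prop))
    (fun x _ => S.hasDerivAt_Φ_space x t) (by fun_prop) hy hz).trans (S.integral_abs_ρ_mul_v_le ht)

lemma hasDerivAt_integral_J_mul_Φ (ht : t ∈ Ioo 0 T) :
    HasDerivAt (fun s => ∫ y in 0..L, S.J y s * S.Φ y s)
      (-((∫ y in 0..L, S.ρ y * S.v y t ^ 2) + ∫ y in 0..L, S.J y t * S.π y t)) t := by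
  have htI := Ioo_subset_Icc_self ht
  refine (hasDerivAt_integral_param (f := fun y t => S.J y t * S.Φ y t)
    (f' := fun y t => S.vy y t * S.Φ y t + S.J y t * S.G y t) S.L_pos.le ht
    (fun y hy s hs => (S.hasDerivAt_J y (Ioo_subset_Icc_self hy) s hs).mul
      (S.hasDerivAt_Φ (Ioo_subset_Icc_self hy) hs)) (by fun_prop) (by fun_prop)).congr_deriv ?_
  have hparts : ∫ y in 0..L, (S.vy y t * S.Φ y t + S.v y t * (S.ρ y * S.v y t)) = 0 :=
    integral_eq_zero_of_hasDerivAt S.L_pos.le (f := fun y => S.v y t * S.Φ y t) (by fun_prop)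
      (fun y hy => (S.hasDerivAt_v_space y hy t htI).mul (S.hasDerivAt_Φ_space y t))
      (Continuous.intervalIntegrable (by fun_prop) _ _)
      (by simp [S.v_left t htI]) (by simp [S.v_right t htI])
  have hsplit : ∀ y, S.vy y t * S.Φ y t + S.J y t * S.G y t =
      (S.vy y t * S.Φ y t + S.v y t * (S.ρ y * S.v y t)) + μ * S.vy y t
        - S.ρ y * S.v y t ^ 2 - S.J y t * S.π y t := by
    intro y
    have := S.μ_pos.ne'
    rw [S.vy_eq]
    field_simp
    ring
  simp only [hsplit]
  rw [intervalIntegral.integral_sub, intervalIntegral.integral_sub, intervalIntegral.integral_add,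
    hparts, intervalIntegral.integral_const_mul, S.integral_vy_eq_zero htI]
  · ring
  all_goals exact Continuous.intervalIntegrable (by fun_prop) _ _

lemma Φ_zero_zero : S.Φ 0 0 = 0 := by simp [Φ]

lemma neg_mul_le_integral_J_mul_Φ (ht : t ∈ Icc 0 T) :
    -(S.length 0 * (S.mass / 2 + S.energy 0) + T * ((γ + 1) * S.energy 0)) ≤
      ∫ y in 0..L, S.J y t * S.Φ y t := by
  have hdecay := le_add_integral_of_hasDerivAt_le (g := fun _ => (γ + 1) * S.energy 0)
    (f := fun s => -∫ y in 0..L, S.J y s * S.Φ y s) (Continuous.continuousOn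
      (continuous_parametric_intervalIntegral_of_continuous' (by fun_prop) 0 L).neg)
    (fun s hs => (S.hasDerivAt_integral_J_mul_Φ hs).neg) continuous_const
    (fun s hs => by
      have hsI := Ioo_subset_Icc_self hs
      linarith [S.integral_ρ_mul_v_sq_le hsI, S.integral_J_mul_π_le hsI]) ht
  rw [intervalIntegral.integral_const, sub_zero, smul_eq_mul] at hdecay
  have h_start : S.length 0 * -(S.mass / 2 + S.energy 0) ≤ ∫ y in 0..L, S.J y 0 * S.Φ y 0 := by
    rw [length, ← intervalIntegral.integral_mul_const]
    refine integral_mono_of_continuous S.L_pos.le (by fun_prop) (by fun_prop) fun y hy => ?_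
    have hosc := (abs_le.1 (S.abs_Φ_sub_Φ_le hy (left_mem_Icc.2 S.L_pos.le)
      (left_mem_Icc.2 S.T_pos.le))).1
    rw [S.Φ_zero_zero, sub_zero] at hosc
    exact mul_le_mul_of_nonneg_left hosc (S.J_pos y 0).le
  have htime : t * ((γ + 1) * S.energy 0) ≤ T * ((γ + 1) * S.energy 0) :=
    mul_le_mul_of_nonneg_right ht.2
      (mul_nonneg (by linarith [S.one_lt_γ]) S.energy_zero_nonneg)
  linarith

lemma neg_le_Φ (hy : y ∈ Icc 0 L) (ht : t ∈ Icc 0 T) :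
    -(2 * (S.mass / 2 + S.energy 0) + T * ((γ + 1) * S.energy 0) / S.length 0) ≤ S.Φ y t := by
  have havg : ∫ z in 0..L, S.J z t * S.Φ z t ≤
      S.length 0 * (S.Φ y t + (S.mass / 2 + S.energy 0)) := by
    rw [← S.length_eq ht, length, ← intervalIntegral.integral_mul_const]
    refine integral_mono_of_continuous S.L_pos.le (by fun_prop) (by fun_prop) fun z hz => ?_
    have := le_of_abs_le (S.abs_Φ_sub_Φ_le hz hy ht)
    exact mul_le_mul_of_nonneg_left (by linarith) (S.J_pos z t).le
  have hℓ := S.length_zero_pos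
  refine le_of_mul_le_mul_left ?_ hℓ
  have : S.length 0 * (T * ((γ + 1) * S.energy 0) / S.length 0) = T * ((γ + 1) * S.energy 0) :=
    mul_div_cancel₀ _ hℓ.ne'
  linarith [S.neg_mul_le_integral_J_mul_Φ ht]

-- `∂ₜ(μ log J - Φ) = π ≥ 0`.
lemma mul_log_J_sub_Φ_le (hy : y ∈ Icc 0 L) (ht : t ∈ Icc 0 T) :
    μ * Real.log (S.J y 0) - S.Φ y 0 ≤ μ * Real.log (S.J y t) - S.Φ y t := by
  have hcont : Continuous fun s => S.Φ y s - μ * Real.log (S.J y s) := by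
    fun_prop (disch := exact fun _ => S.J_ne_zero _ _)
  have hderiv : ∀ s ∈ Ioo 0 T,
      HasDerivAt (fun s => S.Φ y s - μ * Real.log (S.J y s)) (-S.π y s) s := by
    intro s hs
    refine ((S.hasDerivAt_Φ hy hs).sub (((S.hasDerivAt_J y hy s hs).log
      (S.J_ne_zero y s)).const_mul μ)).congr_deriv ?_
    unfold G
    ring
  have := le_add_integral_of_hasDerivAt_le hcont.continuousOn hderiv continuous_const
    (fun s hs => neg_nonpos.2 (S.π_nonneg hy (Ioo_subset_Icc_self hs))) ht
  rw [intervalIntegral.integral_zero] at this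
  linarith

lemma mul_exp_le_J {Jlow : ℝ} (hJlow : 0 < Jlow) (hJ₀ : ∀ y ∈ Icc 0 L, Jlow ≤ S.J y 0)
    (hy : y ∈ Icc 0 L) (ht : t ∈ Icc 0 T) :
    Jlow * Real.exp (-(3 * (S.mass / 2 + S.energy 0)
      + T * ((γ + 1) * S.energy 0) / S.length 0) / μ) ≤ S.J y t := by
  rw [← Real.log_le_log_iff (by positivity) (S.J_pos y t),
    Real.log_mul hJlow.ne' (Real.exp_ne_zero _), Real.log_exp]
  refine le_of_mul_le_mul_left ?_ S.μ_pos
  rw [mul_add, mul_div_cancel₀ _ S.μ_pos.ne']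
  have hosc := le_of_abs_le
    (S.abs_Φ_sub_Φ_le hy (left_mem_Icc.2 S.L_pos.le) (left_mem_Icc.2 S.T_pos.le))
  rw [S.Φ_zero_zero, sub_zero] at hosc
  have hlog : μ * Real.log Jlow ≤ μ * Real.log (S.J y 0) :=
    mul_le_mul_of_nonneg_left (Real.log_le_log hJlow (hJ₀ y hy)) S.μ_pos.le
  linarith [S.neg_le_Φ hy ht, S.mul_log_J_sub_Φ_le hy ht]

/-! ### Energy estimate for the flux -/

/-- The weighted flux norm `∫ J G² dy`, the quantity of the Grönwall argument. -/
noncomputable def fluxEnergy (t : ℝ) : ℝ := ∫ y in 0..L, S.J y t * S.G y t ^ 2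

/-- `∫ ρ (∂ₜv)² dy`, the dissipation associated with `fluxEnergy`. -/
noncomputable def dissipation (t : ℝ) : ℝ := ∫ y in 0..L, S.ρ y * S.vt y t ^ 2

@[fun_prop]
lemma continuous_fluxEnergy : Continuous S.fluxEnergy :=
  continuous_parametric_intervalIntegral_of_continuous' (by fun_prop) 0 L

@[fun_prop]
lemma continuous_dissipation : Continuous S.dissipation :=
  continuous_parametric_intervalIntegral_of_continuous' (by fun_prop) 0 L

lemma fluxEnergy_nonneg (t : ℝ) : 0 ≤ S.fluxEnergy t :=
  integral_nonneg S.L_pos.le fun y _ => mul_nonneg (S.J_pos y t).le (sq_nonneg _)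

lemma dissipation_nonneg (t : ℝ) : 0 ≤ S.dissipation t :=
  integral_nonneg S.L_pos.le fun y _ => mul_nonneg (S.ρ_nonneg y) (sq_nonneg _)

variable {c δ ρbar : ℝ}

lemma integral_G_sq_le (hc : 0 < c) (hJ : ∀ y ∈ Icc 0 L, c ≤ S.J y t) :
    ∫ y in 0..L, S.G y t ^ 2 ≤ S.fluxEnergy t / c := by
  rw [le_div_iff₀ hc, ← intervalIntegral.integral_mul_const]
  refine integral_mono_of_continuous S.L_pos.le (by fun_prop) (by fun_prop) fun y hy => ?_
  rw [mul_comm]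
  exact mul_le_mul_of_nonneg_right (hJ y hy) (sq_nonneg _)

lemma abs_two_mul_G_mul_ρ_mul_vt_le (hδ : 0 < δ) (hρ : S.ρ y ≤ ρbar) :
    |2 * S.G y t * (S.ρ y * S.vt y t)| ≤
      δ * (S.ρ y * S.vt y t ^ 2) + ρbar / δ * S.G y t ^ 2 := by
  have hρ0 := S.ρ_nonneg y
  have hsq : 0 ≤ S.ρ y / δ * (δ * |S.vt y t| - |S.G y t|) ^ 2 := by positivity
  have hexpand : S.ρ y / δ * (δ * |S.vt y t| - |S.G y t|) ^ 2 =
      δ * (S.ρ y * S.vt y t ^ 2) + S.ρ y / δ * S.G y t ^ 2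
        - 2 * |S.G y t| * (S.ρ y * |S.vt y t|) := by
    rw [← sq_abs (S.vt y t), ← sq_abs (S.G y t)]
    field_simp
    ring
  have hmono : S.ρ y / δ * S.G y t ^ 2 ≤ ρbar / δ * S.G y t ^ 2 := by gcongr
  rw [abs_mul, abs_mul, abs_mul, abs_of_nonneg hρ0, abs_two]
  linarith

lemma G_sq_le (hc : 0 < c) (hJ : ∀ y ∈ Icc 0 L, c ≤ S.J y t) (hρ : ∀ y ∈ Icc 0 L, S.ρ y ≤ ρbar)
    (hδ : 0 < δ) (hy : y ∈ Icc 0 L) (ht : t ∈ Icc 0 T) :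
    S.G y t ^ 2 ≤ δ * S.dissipation t + (1 / L + ρbar / δ) / c * S.fluxEnergy t := by
  have hL := S.L_pos
  have hρbar : 0 ≤ ρbar := (S.ρ_nonneg y).trans (hρ y hy)
  have hsobolev := le_average_add_integral_abs_deriv (f := fun x => S.G x t ^ 2)
    (f' := fun x => 2 * S.G x t * (S.ρ x * S.vt x t)) hL (Continuous.continuousOn (by fun_prop))
    (fun x hx => by simpa using (S.hasDerivAt_G_space hx ht).fun_pow 2) (by fun_prop) hy
  have hyoung : ∫ x in 0..L, |2 * S.G x t * (S.ρ x * S.vt x t)| ≤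
      δ * S.dissipation t + ρbar / δ * ∫ x in 0..L, S.G x t ^ 2 := by
    rw [dissipation, ← intervalIntegral.integral_const_mul, ← intervalIntegral.integral_const_mul,
      ← intervalIntegral.integral_add (Continuous.intervalIntegrable (by fun_prop) _ _)
        (Continuous.intervalIntegrable (by fun_prop) _ _)]
    exact integral_mono_of_continuous hL.le (by fun_prop) (by fun_prop) fun x hx =>
      S.abs_two_mul_G_mul_ρ_mul_vt_le hδ (hρ x hx)
  calc S.G y t ^ 2 ≤ δ * S.dissipation t + (1 / L + ρbar / δ) * ∫ x in 0..L, S.G x t ^ 2 := by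
        rw [sub_zero] at hsobolev
        linarith [one_div_mul_eq_div L (∫ x in 0..L, S.G x t ^ 2)]
    _ ≤ δ * S.dissipation t + (1 / L + ρbar / δ) * (S.fluxEnergy t / c) := by
        gcongr
        exact S.integral_G_sq_le hc hJ
    _ = _ := by ring

lemma hasDerivAt_fluxEnergy (ht : t ∈ Ioo 0 T) : HasDerivAt S.fluxEnergy
    (∫ y in 0..L, (2 * (2 * γ - 1) * (S.ρ y * S.v y t * S.vt y t * S.G y t)
      - 2 * μ * (S.ρ y * S.vt y t ^ 2))) t := by
  have htI := Ioo_subset_Icc_self ht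
  refine (hasDerivAt_integral_param (f := fun y t => S.J y t * S.G y t ^ 2)
    (f' := fun y t => S.vy y t * S.G y t ^ 2 + S.J y t * (2 * S.G y t * S.Gt y t))
    S.L_pos.le ht (fun y hy s hs => by
      simpa using (S.hasDerivAt_J y (Ioo_subset_Icc_self hy) s hs).fun_mul
        ((S.hasDerivAt_G hy hs).fun_pow 2)) (by fun_prop) (by fun_prop)).congr_deriv ?_
  have hparts_v : ∫ y in 0..L,
      (S.vy y t * S.G y t ^ 2 + S.v y t * (2 * S.G y t * (S.ρ y * S.vt y t))) = 0 :=
    integral_eq_zero_of_hasDerivAt S.L_pos.le (f := fun y => S.v y t * S.G y t ^ 2) (by fun_prop)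
      (fun y hy => by
        simpa using (S.hasDerivAt_v_space y hy t htI).fun_mul
          ((S.hasDerivAt_G_space hy htI).fun_pow 2))
      (Continuous.intervalIntegrable (by fun_prop) _ _)
      (by simp [S.v_left t htI]) (by simp [S.v_right t htI])
  have hparts_vt : ∫ y in 0..L, (S.vty y t * S.G y t + S.vt y t * (S.ρ y * S.vt y t)) = 0 :=
    integral_eq_zero_of_hasDerivAt S.L_pos.le (f := fun y => S.vt y t * S.G y t) (by fun_prop)
      (fun y hy => (S.hasDerivAt_vt_space y hy t htI).mul (S.hasDerivAt_G_space hy htI))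
      (Continuous.intervalIntegrable (by fun_prop) _ _)
      (by simp [S.vt_left ht]) (by simp [S.vt_right ht])
  have hsplit : ∀ y, S.vy y t * S.G y t ^ 2 + S.J y t * (2 * S.G y t * S.Gt y t) =
      (1 - 2 * γ) * (S.vy y t * S.G y t ^ 2 + S.v y t * (2 * S.G y t * (S.ρ y * S.vt y t)))
      + 2 * μ * (S.vty y t * S.G y t + S.vt y t * (S.ρ y * S.vt y t))
      + (2 * (2 * γ - 1) * (S.ρ y * S.v y t * S.vt y t * S.G y t)
        - 2 * μ * (S.ρ y * S.vt y t ^ 2)) := by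
    intro y
    have := S.J_ne_zero y t
    unfold Gt
    field_simp
    ring
  simp only [hsplit]
  rw [intervalIntegral.integral_add, intervalIntegral.integral_add,
    intervalIntegral.integral_const_mul, intervalIntegral.integral_const_mul, hparts_v, hparts_vt]
  · ring
  all_goals exact Continuous.intervalIntegrable (by fun_prop) _ _

lemma ρ_mul_v_mul_vt_mul_G_le {n : ℝ} (hG : S.G y t ^ 2 ≤ n) :
    2 * (2 * γ - 1) * (S.ρ y * S.v y t * S.vt y t * S.G y t) ≤
      2 * (2 * γ - 1) ^ 2 / μ * n * (S.ρ y * S.v y t ^ 2) + μ / 2 * (S.ρ y * S.vt y t ^ 2) := by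
  have hρ := S.ρ_nonneg y
  have hμ := S.μ_pos
  have hsq : 0 ≤ S.ρ y / (2 * μ) * (2 * (2 * γ - 1) * S.v y t * S.G y t - μ * S.vt y t) ^ 2 := by
    positivity
  have hexpand :
      S.ρ y / (2 * μ) * (2 * (2 * γ - 1) * S.v y t * S.G y t - μ * S.vt y t) ^ 2 =
        2 * (2 * γ - 1) ^ 2 / μ * S.G y t ^ 2 * (S.ρ y * S.v y t ^ 2)
        + μ / 2 * (S.ρ y * S.vt y t ^ 2)
        - 2 * (2 * γ - 1) * (S.ρ y * S.v y t * S.vt y t * S.G y t) := by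
    field_simp
    ring
  have hmono : 2 * (2 * γ - 1) ^ 2 / μ * S.G y t ^ 2 * (S.ρ y * S.v y t ^ 2) ≤
      2 * (2 * γ - 1) ^ 2 / μ * n * (S.ρ y * S.v y t ^ 2) := by gcongr
  linarith

lemma deriv_fluxEnergy_le {b : ℝ} (hδ : 8 * (2 * γ - 1) ^ 2 * S.energy 0 * δ ≤ μ ^ 2)
    (hG : ∀ y ∈ Icc 0 L, S.G y t ^ 2 ≤ δ * S.dissipation t + b * S.fluxEnergy t)
    (ht : t ∈ Icc 0 T) :
    ∫ y in 0..L, (2 * (2 * γ - 1) * (S.ρ y * S.v y t * S.vt y t * S.G y t)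
      - 2 * μ * (S.ρ y * S.vt y t ^ 2)) ≤
    4 * (2 * γ - 1) ^ 2 * S.energy 0 / μ * b * S.fluxEnergy t - μ * S.dissipation t := by
  have hμ := S.μ_pos
  set n := δ * S.dissipation t + b * S.fluxEnergy t with hn
  have hn0 : 0 ≤ n := (sq_nonneg _).trans (hG 0 (left_mem_Icc.2 S.L_pos.le))
  have hδ' : 4 * (2 * γ - 1) ^ 2 * S.energy 0 / μ * δ ≤ μ / 2 := by
    rw [div_mul_eq_mul_div, div_le_div_iff₀ hμ two_pos]
    linarith
  calc ∫ y in 0..L, (2 * (2 * γ - 1) * (S.ρ y * S.v y t * S.vt y t * S.G y t)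
        - 2 * μ * (S.ρ y * S.vt y t ^ 2))
      ≤ ∫ y in 0..L, (2 * (2 * γ - 1) ^ 2 / μ * n * (S.ρ y * S.v y t ^ 2)
          - 3 / 2 * μ * (S.ρ y * S.vt y t ^ 2)) := by
        refine integral_mono_of_continuous S.L_pos.le (by fun_prop) (by fun_prop) fun y hy => ?_
        linarith [S.ρ_mul_v_mul_vt_mul_G_le (hG y hy)]
    _ = 2 * (2 * γ - 1) ^ 2 / μ * n * (∫ y in 0..L, S.ρ y * S.v y t ^ 2)
          - 3 / 2 * μ * S.dissipation t := by
        rw [intervalIntegral.integral_sub (Continuous.intervalIntegrable (by fun_prop) _ _)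
          (Continuous.intervalIntegrable (by fun_prop) _ _), intervalIntegral.integral_const_mul,
          intervalIntegral.integral_const_mul, dissipation]
    _ ≤ 2 * (2 * γ - 1) ^ 2 / μ * n * (2 * S.energy 0) - 3 / 2 * μ * S.dissipation t := by
        gcongr
        exact S.integral_ρ_mul_v_sq_le ht
    _ = 4 * (2 * γ - 1) ^ 2 * S.energy 0 / μ * δ * S.dissipation t
          + 4 * (2 * γ - 1) ^ 2 * S.energy 0 / μ * b * S.fluxEnergy t
          - 3 / 2 * μ * S.dissipation t := by
        rw [hn]
        ring
    _ ≤ _ := by linarith [mul_le_mul_of_nonneg_right hδ' (S.dissipation_nonneg t)]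

lemma fluxEnergy_add_le {b : ℝ} (hb : 0 ≤ b)
    (hδ : 8 * (2 * γ - 1) ^ 2 * S.energy 0 * δ ≤ μ ^ 2)
    (hG : ∀ y ∈ Icc 0 L, ∀ t ∈ Icc 0 T,
      S.G y t ^ 2 ≤ δ * S.dissipation t + b * S.fluxEnergy t) (ht : t ∈ Icc 0 T) :
    S.fluxEnergy t + μ * ∫ s in 0..t, S.dissipation s ≤
      Real.exp (4 * (2 * γ - 1) ^ 2 * S.energy 0 / μ * b * t) * S.fluxEnergy 0 := by
  have hμ := S.μ_pos
  have hE := S.energy_zero_nonneg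
  rw [← intervalIntegral.integral_const_mul]
  exact add_integral_le_exp_mul_of_hasDerivAt_le (by positivity) S.continuous_fluxEnergy
    (by fun_prop) (fun s => mul_nonneg hμ.le (S.dissipation_nonneg s))
    (fun s hs => S.hasDerivAt_fluxEnergy hs)
    (fun s hs => S.deriv_fluxEnergy_le hδ (fun y hy => hG y hy s (Ioo_subset_Icc_self hs))
      (Ioo_subset_Icc_self hs)) ht

lemma fluxEnergy_zero_le {Jbar K : ℝ} (hJ₀ : ∀ y ∈ Icc 0 L, S.J y 0 ≤ Jbar)
    (hK : ∫ y in 0..L, S.G y 0 ^ 2 ≤ K ^ 2) : S.fluxEnergy 0 ≤ Jbar * K ^ 2 := by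
  have hJbar : 0 ≤ Jbar := (S.J_pos 0 0).le.trans (hJ₀ 0 (left_mem_Icc.2 S.L_pos.le))
  calc S.fluxEnergy 0 ≤ ∫ y in 0..L, Jbar * S.G y 0 ^ 2 :=
        integral_mono_of_continuous S.L_pos.le (by fun_prop) (by fun_prop) fun y hy =>
          mul_le_mul_of_nonneg_right (hJ₀ y hy) (sq_nonneg _)
    _ = Jbar * ∫ y in 0..L, S.G y 0 ^ 2 := intervalIntegral.integral_const_mul _ _
    _ ≤ Jbar * K ^ 2 := mul_le_mul_of_nonneg_left hK hJbar

variable {N : ℝ → ℝ} {P Jmax : ℝ}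

lemma π_le (hN : Continuous N) (hGN : ∀ t ∈ Icc 0 T, S.G y t ^ 2 ≤ N t)
    (hy : y ∈ Icc 0 L) (ht : t ∈ Icc 0 T) :
    S.π y t ≤ S.π y 0 + γ ^ 2 / (4 * μ) * ∫ s in 0..t, N s := by
  rw [← intervalIntegral.integral_const_mul]
  refine le_add_integral_of_hasDerivAt_le (Continuous.continuousOn (by fun_prop))
    (fun s hs => S.hasDerivAt_π hy hs) (by fun_prop) (fun s hs => ?_) ht
  have hμ := S.μ_pos
  have hGs := hGN s (Ioo_subset_Icc_self hs)
  calc ((γ - 1) * S.G y s ^ 2 + (γ - 2) * S.G y s * S.π y s - S.π y s ^ 2) / μ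
      ≤ (γ ^ 2 / 4 * S.G y s ^ 2) / μ := by
        gcongr
        nlinarith [sq_nonneg ((γ - 2) / 2 * S.G y s - S.π y s)]
    _ ≤ (γ ^ 2 / 4 * N s) / μ := by gcongr
    _ = γ ^ 2 / (4 * μ) * N s := by field_simp

lemma J_le_mul_exp (hN : Continuous N) (hGN : ∀ t ∈ Icc 0 T, S.G y t ^ 2 ≤ N t)
    (hπ : ∀ t ∈ Icc 0 T, S.π y t ≤ P) (hy : y ∈ Icc 0 L) (ht : t ∈ Icc 0 T) :
    S.J y t ≤ S.J y 0 * Real.exp ((t * (1 + P) + ∫ s in 0..t, N s) / μ) := by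
  have hμ := S.μ_pos
  have hgrowth : Real.log (S.J y t) ≤
      Real.log (S.J y 0) + ∫ s in 0..t, (1 + P + N s) / μ := by
    refine le_add_integral_of_hasDerivAt_le (f := fun s => Real.log (S.J y s))
      (Continuous.continuousOn (by fun_prop (disch := exact fun _ => S.J_ne_zero _ _)))
      (fun s hs => (S.hasDerivAt_J y hy s hs).log (S.J_ne_zero y s)) (by fun_prop)
      (fun s hs => ?_) ht
    have hsI := Ioo_subset_Icc_self hs
    rw [le_div_iff₀ hμ]
    have hflux : S.vy y s / S.J y s * μ = S.G y s + S.π y s := by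
      unfold G
      ring
    nlinarith [hGN s hsI, hπ s hsI, sq_nonneg (S.G y s - 1)]
  rw [intervalIntegral.integral_div, intervalIntegral.integral_add intervalIntegrable_const
    (hN.intervalIntegrable _ _), intervalIntegral.integral_const, sub_zero,
    smul_eq_mul] at hgrowth
  have hJ₀ := S.J_pos y 0
  rwa [← Real.log_le_log_iff (S.J_pos y t) (by positivity),
    Real.log_mul hJ₀.ne' (Real.exp_ne_zero _), Real.log_exp]

/-! ### The weighted estimate for the dissipation -/

-- No time derivative of `∂ₜv` is available, so `dissipation s - dissipation t` is first
-- integrated by parts against `G y s - G y t`, and only `G` is differentiated in time.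
lemma hasDerivAt_dissipation (ht : t ∈ Ioo 0 T) :
    HasDerivAt S.dissipation (∫ y in 0..L, -(2 * S.vty y t * S.Gt y t)) t := by
  have hincr : ∀ s ∈ Ioo 0 T, S.dissipation s = S.dissipation t
      + ∫ y in 0..L, (S.G y s - S.G y t) * -(S.vty y s + S.vty y t) := by
    intro s hs
    have hsI := Ioo_subset_Icc_self hs
    have htI := Ioo_subset_Icc_self ht
    have hparts : ∫ y in 0..L,
        ((S.ρ y * S.vt y s - S.ρ y * S.vt y t) * (S.vt y s + S.vt y t)
          + (S.G y s - S.G y t) * (S.vty y s + S.vty y t)) = 0 :=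
      integral_eq_zero_of_hasDerivAt S.L_pos.le
        (f := fun y => (S.G y s - S.G y t) * (S.vt y s + S.vt y t)) (by fun_prop)
        (fun y hy => ((S.hasDerivAt_G_space hy hsI).sub (S.hasDerivAt_G_space hy htI)).mul
          ((S.hasDerivAt_vt_space y hy s hsI).add (S.hasDerivAt_vt_space y hy t htI)))
        (Continuous.intervalIntegrable (by fun_prop) _ _)
        (by simp [S.vt_left hs, S.vt_left ht]) (by simp [S.vt_right hs, S.vt_right ht])
    rw [dissipation, dissipation, ← intervalIntegral.integral_add
      (Continuous.intervalIntegrable (by fun_prop) _ _)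
      (Continuous.intervalIntegrable (by fun_prop) _ _), ← sub_eq_zero,
      ← intervalIntegral.integral_sub (Continuous.intervalIntegrable (by fun_prop) _ _)
      (Continuous.intervalIntegrable (by fun_prop) _ _), ← hparts]
    congr 1 with y
    ring
  have hderiv := (hasDerivAt_integral_sub_mul (k := fun y s => -(S.vty y s + S.vty y t))
    S.L_pos.le ht (fun y hy s hs => S.hasDerivAt_G hy hs) S.continuous_Gt (by fun_prop)).const_add
    (S.dissipation t)
  refine (hderiv.congr_of_eventuallyEq
    (Filter.eventually_of_mem (Ioo_mem_nhds ht.1 ht.2) hincr)).congr_deriv ?_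
  congr 1 with y
  ring

lemma neg_two_mul_vty_mul_Gt_le {n : ℝ} (hG : S.G y t ^ 2 ≤ n) (hπ₀ : 0 ≤ S.π y t)
    (hπ : S.π y t ≤ P) (hJ : S.J y t ≤ Jmax) :
    -(2 * S.vty y t * S.Gt y t) ≤ -(μ / Jmax) * S.vty y t ^ 2
      + 2 * γ ^ 2 / μ ^ 3 * (n + P ^ 2) * (S.J y t * S.G y t ^ 2) := by
  have hμ := S.μ_pos
  have hJ₀ := S.J_pos y t
  have hγ := S.one_lt_γ
  have hsq : 0 ≤ (μ * S.vty y t - γ * S.vy y t * S.G y t) ^ 2 / (μ * S.J y t) := by positivity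
  have hcomplete : -(2 * S.vty y t * S.Gt y t) = -(μ / S.J y t * S.vty y t ^ 2)
      - (μ * S.vty y t - γ * S.vy y t * S.G y t) ^ 2 / (μ * S.J y t)
      + (γ * S.vy y t * S.G y t) ^ 2 / (μ * S.J y t) := by
    unfold Gt
    field_simp
    ring
  have hremainder : (γ * S.vy y t * S.G y t) ^ 2 / (μ * S.J y t) =
      γ ^ 2 / μ ^ 3 * (S.G y t + S.π y t) ^ 2 * (S.J y t * S.G y t ^ 2) := by
    rw [S.vy_eq]
    field_simp
  have hsum : (S.G y t + S.π y t) ^ 2 ≤ 2 * (n + P ^ 2) := by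
    have : S.π y t ^ 2 ≤ P ^ 2 := by gcongr
    nlinarith [sq_nonneg (S.G y t - S.π y t)]
  have hvty : μ / Jmax * S.vty y t ^ 2 ≤ μ / S.J y t * S.vty y t ^ 2 := by gcongr
  have hbound : γ ^ 2 / μ ^ 3 * (S.G y t + S.π y t) ^ 2 * (S.J y t * S.G y t ^ 2) ≤
      2 * γ ^ 2 / μ ^ 3 * (n + P ^ 2) * (S.J y t * S.G y t ^ 2) :=
    calc
      _ ≤ γ ^ 2 / μ ^ 3 * (2 * (n + P ^ 2)) * (S.J y t * S.G y t ^ 2) := by gcongr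
      _ = _ := by ring
  rw [hcomplete, hremainder]
  linarith

lemma deriv_dissipation_le {n : ℝ} (hG : ∀ y ∈ Icc 0 L, S.G y t ^ 2 ≤ n)
    (hπ : ∀ y ∈ Icc 0 L, S.π y t ≤ P) (hJ : ∀ y ∈ Icc 0 L, S.J y t ≤ Jmax) (ht : t ∈ Icc 0 T) :
    ∫ y in 0..L, -(2 * S.vty y t * S.Gt y t) ≤ -(μ / Jmax) * (∫ y in 0..L, S.vty y t ^ 2)
      + 2 * γ ^ 2 / μ ^ 3 * (n + P ^ 2) * S.fluxEnergy t := by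
  rw [fluxEnergy, ← intervalIntegral.integral_const_mul, ← intervalIntegral.integral_const_mul,
    ← intervalIntegral.integral_add (Continuous.intervalIntegrable (by fun_prop) _ _)
      (Continuous.intervalIntegrable (by fun_prop) _ _)]
  exact integral_mono_of_continuous S.L_pos.le (by fun_prop) (by fun_prop) fun y hy =>
    S.neg_two_mul_vty_mul_Gt_le (hG y hy) (S.π_nonneg hy ht) (hπ y hy) (hJ y hy)

lemma integral_mul_integral_vty_sq_le {A : ℝ} (hN : Continuous N)
    (hGN : ∀ y ∈ Icc 0 L, ∀ t ∈ Icc 0 T, S.G y t ^ 2 ≤ N t)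
    (hπ : ∀ y ∈ Icc 0 L, ∀ t ∈ Icc 0 T, S.π y t ≤ P)
    (hJ : ∀ y ∈ Icc 0 L, ∀ t ∈ Icc 0 T, S.J y t ≤ Jmax)
    (hA : ∀ t ∈ Icc 0 T, S.fluxEnergy t ≤ A) :
    μ / Jmax * (∫ t in 0..T, t * ∫ y in 0..L, S.vty y t ^ 2) ≤ (∫ t in 0..T, S.dissipation t)
      + T * (2 * γ ^ 2 / μ ^ 3) * A * ((∫ t in 0..T, N t) + T * P ^ 2) := by
  have hμ := S.μ_pos
  have hT := S.T_pos
  have : Continuous fun t => ∫ y in 0..L, S.vty y t ^ 2 :=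
    continuous_parametric_intervalIntegral_of_continuous' (by fun_prop) 0 L
  have hgrowth : T * S.dissipation T ≤ 0 * S.dissipation 0 + ∫ t in 0..T, (S.dissipation t
      + (-(μ / Jmax) * (t * ∫ y in 0..L, S.vty y t ^ 2)
        + T * (2 * γ ^ 2 / μ ^ 3) * A * (N t + P ^ 2))) := by
    refine le_add_integral_of_hasDerivAt_le (f := fun t => t * S.dissipation t)
      (Continuous.continuousOn (by fun_prop))
      (fun t ht => (hasDerivAt_id t).mul (S.hasDerivAt_dissipation ht)) (by fun_prop)
      (fun t ht => ?_) (right_mem_Icc.2 hT.le)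
    have htI := Ioo_subset_Icc_self ht
    have hN₀ : 0 ≤ N t := (sq_nonneg _).trans (hGN 0 (left_mem_Icc.2 S.L_pos.le) t htI)
    have hX₀ := S.fluxEnergy_nonneg t
    have hderiv := mul_le_mul_of_nonneg_left (S.deriv_dissipation_le (fun y hy => hGN y hy t htI)
      (fun y hy => hπ y hy t htI) (fun y hy => hJ y hy t htI) htI) ht.1.le
    have hweight : t * (2 * γ ^ 2 / μ ^ 3 * (N t + P ^ 2) * S.fluxEnergy t) ≤
        T * (2 * γ ^ 2 / μ ^ 3 * (N t + P ^ 2) * A) := by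
      gcongr
      exacts [ht.2.le, hA t htI]
    simp only [id]
    linarith
  rw [intervalIntegral.integral_add, intervalIntegral.integral_add,
    intervalIntegral.integral_const_mul, intervalIntegral.integral_const_mul,
    intervalIntegral.integral_add, intervalIntegral.integral_const, sub_zero, smul_eq_mul,
    zero_mul, zero_add] at hgrowth
  · linarith [mul_nonneg hT.le (S.dissipation_nonneg T)]
  all_goals exact Continuous.intervalIntegrable (by fun_prop) _ _

lemma integral_dissipation_le {A : ℝ}
    (hA : S.fluxEnergy t + μ * ∫ s in 0..t, S.dissipation s ≤ A) :
    ∫ s in 0..t, S.dissipation s ≤ A / μ := by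
  rw [le_div_iff₀' S.μ_pos]
  linarith [S.fluxEnergy_nonneg t]

lemma fluxEnergy_le {A : ℝ} (ht : 0 ≤ t)
    (hA : S.fluxEnergy t + μ * ∫ s in 0..t, S.dissipation s ≤ A) : S.fluxEnergy t ≤ A := by
  have := mul_nonneg S.μ_pos.le
    (integral_nonneg (μ := volume) ht fun s _ => S.dissipation_nonneg s)
  linarith

lemma mass_le (hρ : ∀ y ∈ Icc 0 L, S.ρ y ≤ ρbar) : S.mass ≤ L * ρbar := by
  simpa [mass] using integral_mono_of_continuous S.L_pos.le S.continuous_ρ continuous_const hρ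

lemma le_length_zero {Jlow : ℝ} (hJ₀ : ∀ y ∈ Icc 0 L, Jlow ≤ S.J y 0) :
    L * Jlow ≤ S.length 0 := by
  simpa [length] using integral_mono_of_continuous S.L_pos.le continuous_const
    (by fun_prop) hJ₀

/-! ### Bounds depending only on the data -/

/-- Constants bounding the data of a solution; the bounds below depend on the solution only
through them. -/
structure DataBounds where
  ρbar : ℝ
  Jlow : ℝ
  Jbar : ℝ
  P₀ : ℝ
  E₀ : ℝ
  K₀ : ℝ
  Jlow_pos : 0 < Jlow

/-- The density and the initial values of a solution obey the bounds `B`. -/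
structure ObeysBounds (B : DataBounds) : Prop where
  ρ_le : ∀ y ∈ Icc 0 L, S.ρ y ≤ B.ρbar
  le_J_zero : ∀ y ∈ Icc 0 L, B.Jlow ≤ S.J y 0
  J_zero_le : ∀ y ∈ Icc 0 L, S.J y 0 ≤ B.Jbar
  π_zero_le : ∀ y ∈ Icc 0 L, S.π y 0 ≤ B.P₀
  energy_zero_le : S.energy 0 ≤ B.E₀
  integral_G_zero_sq_le : ∫ y in 0..L, S.G y 0 ^ 2 ≤ B.K₀ ^ 2

variable {S} {B : DataBounds}

lemma ObeysBounds.ρbar_nonneg (hS : S.ObeysBounds B) : 0 ≤ B.ρbar :=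
  (S.ρ_nonneg 0).trans (hS.ρ_le 0 (left_mem_Icc.2 S.L_pos.le))

lemma ObeysBounds.E₀_nonneg (hS : S.ObeysBounds B) : 0 ≤ B.E₀ :=
  S.energy_zero_nonneg.trans hS.energy_zero_le

variable (L T μ γ B)

lemma exists_pos_le_J : ∃ c > 0, ∀ S : ExtendedSolution L T μ γ, S.ObeysBounds B →
    ∀ y ∈ Icc 0 L, ∀ t ∈ Icc 0 T, c ≤ S.J y t := by
  have hJlow := B.Jlow_pos
  refine ⟨B.Jlow * Real.exp (-(3 * (L * B.ρbar / 2 + B.E₀)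
    + T * ((γ + 1) * B.E₀) / (L * B.Jlow)) / μ), by positivity, fun S hS y hy t ht =>
      le_trans ?_ (S.mul_exp_le_J hJlow hS.le_J_zero hy ht)⟩
  have hL := S.L_pos
  have hT := S.T_pos
  have hμ := S.μ_pos
  have hγ := zero_lt_one.trans S.one_lt_γ
  have hE₀ := hS.E₀_nonneg
  gcongr
  exacts [S.mass_le hS.ρ_le, hS.energy_zero_le, hS.energy_zero_le, S.le_length_zero hS.le_J_zero]

lemma exists_fluxEnergy_add_le : ∃ A, ∀ S : ExtendedSolution L T μ γ, S.ObeysBounds B →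
    ∀ t ∈ Icc 0 T, S.fluxEnergy t + μ * ∫ s in 0..t, S.dissipation s ≤ A := by
  obtain ⟨c, hc, hJ⟩ := exists_pos_le_J L T μ γ B
  set δ := μ ^ 2 / (8 * (2 * γ - 1) ^ 2 * (B.E₀ + 1)) with hδ_def
  set b := (1 / L + B.ρbar / δ) / c
  refine ⟨Real.exp (4 * (2 * γ - 1) ^ 2 * B.E₀ / μ * b * T) * (B.Jbar * B.K₀ ^ 2),
    fun S hS t ht => ?_⟩
  have hμ := S.μ_pos
  have hL := S.L_pos
  have hγ : 0 < 2 * γ - 1 := by linarith [S.one_lt_γ]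
  have hE₀ := hS.E₀_nonneg
  have hρbar := hS.ρbar_nonneg
  have hδ : 0 < δ := by positivity
  have hb : 0 ≤ b := by positivity
  have hδ_small : 8 * (2 * γ - 1) ^ 2 * S.energy 0 * δ ≤ μ ^ 2 :=
    calc
      _ ≤ 8 * (2 * γ - 1) ^ 2 * (B.E₀ + 1) * δ := by
        gcongr
        linarith [hS.energy_zero_le]
      _ = μ ^ 2 := by
        rw [hδ_def]
        field_simp
  refine (S.fluxEnergy_add_le hb hδ_small (fun y hy t ht =>
    S.G_sq_le hc (fun y hy => hJ S hS y hy t ht) hS.ρ_le hδ hy ht) ht).trans ?_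
  have ht₀ := ht.1
  have hX₀ := S.fluxEnergy_nonneg 0
  gcongr
  exacts [hS.energy_zero_le, ht.2, S.fluxEnergy_zero_le hS.J_zero_le hS.integral_G_zero_sq_le]

lemma exists_majorant_G_sq : ∃ M, ∀ S : ExtendedSolution L T μ γ, S.ObeysBounds B →
    ∃ N : ℝ → ℝ, Continuous N ∧ (∀ y ∈ Icc 0 L, ∀ t ∈ Icc 0 T, S.G y t ^ 2 ≤ N t) ∧
      ∀ t ∈ Icc 0 T, ∫ s in 0..t, N s ≤ M := by
  obtain ⟨c, hc, hJ⟩ := exists_pos_le_J L T μ γ B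
  obtain ⟨A, hA⟩ := exists_fluxEnergy_add_le L T μ γ B
  set b := (1 / L + B.ρbar / 1) / c
  refine ⟨1 * (A / μ) + b * (A * T), fun S hS => ⟨fun t => 1 * S.dissipation t + b * S.fluxEnergy t,
    by fun_prop, fun y hy t ht =>
      S.G_sq_le hc (fun y hy => hJ S hS y hy t ht) hS.ρ_le one_pos hy ht, fun t ht => ?_⟩⟩
  have hL := S.L_pos
  have hρbar := hS.ρbar_nonneg
  have : 0 ≤ b := by positivity
  have hX : ∀ s ∈ Icc 0 T, S.fluxEnergy s ≤ A := fun s hs => S.fluxEnergy_le hs.1 (hA S hS s hs)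
  have hXint : ∫ s in 0..t, S.fluxEnergy s ≤ A * T :=
    calc
      _ ≤ ∫ _ in 0..t, A := integral_mono_of_continuous ht.1 (by fun_prop) continuous_const
        fun s hs => hX s ⟨hs.1, hs.2.trans ht.2⟩
      _ = A * t := by simp [mul_comm]
      _ ≤ A * T := mul_le_mul_of_nonneg_left ht.2 ((S.fluxEnergy_nonneg t).trans (hX t ht))
  rw [intervalIntegral.integral_add (Continuous.intervalIntegrable (by fun_prop) _ _)
    (Continuous.intervalIntegrable (by fun_prop) _ _), intervalIntegral.integral_const_mul,
    intervalIntegral.integral_const_mul]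
  gcongr
  exact S.integral_dissipation_le (hA S hS t ht)

lemma exists_π_le : ∃ P, ∀ S : ExtendedSolution L T μ γ, S.ObeysBounds B →
    ∀ y ∈ Icc 0 L, ∀ t ∈ Icc 0 T, S.π y t ≤ P := by
  obtain ⟨M, hM⟩ := exists_majorant_G_sq L T μ γ B
  refine ⟨B.P₀ + γ ^ 2 / (4 * μ) * M, fun S hS y hy t ht => ?_⟩
  obtain ⟨N, hN, hGN, hNM⟩ := hM S hS
  have hμ := S.μ_pos
  refine (S.π_le hN (hGN y hy) hy ht).trans ?_
  gcongr
  exacts [hS.π_zero_le y hy, hNM t ht]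

lemma exists_J_le : ∃ Jmax, ∀ S : ExtendedSolution L T μ γ, S.ObeysBounds B →
    ∀ y ∈ Icc 0 L, ∀ t ∈ Icc 0 T, S.J y t ≤ Jmax := by
  obtain ⟨M, hM⟩ := exists_majorant_G_sq L T μ γ B
  obtain ⟨P, hP⟩ := exists_π_le L T μ γ B
  refine ⟨B.Jbar * Real.exp ((T * (1 + P) + M) / μ), fun S hS y hy t ht => ?_⟩
  obtain ⟨N, hN, hGN, hNM⟩ := hM S hS
  have hμ := S.μ_pos
  have hP₀ : 0 ≤ P := (S.π_nonneg hy ht).trans (hP S hS y hy t ht)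
  have hJbar : 0 ≤ B.Jbar := (S.J_pos y 0).le.trans (hS.J_zero_le y hy)
  refine (S.J_le_mul_exp hN (hGN y hy) (hP S hS y hy) hy ht).trans ?_
  gcongr
  exacts [hS.J_zero_le y hy, ht.2, hNM t ht]

theorem exists_integral_mul_integral_vty_sq_le :
    ∃ C, ∀ S : ExtendedSolution L T μ γ, S.ObeysBounds B →
      ∫ t in 0..T, t * ∫ y in 0..L, S.vty y t ^ 2 ≤ C := by
  obtain ⟨A, hA⟩ := exists_fluxEnergy_add_le L T μ γ B
  obtain ⟨M, hM⟩ := exists_majorant_G_sq L T μ γ B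
  obtain ⟨P, hP⟩ := exists_π_le L T μ γ B
  obtain ⟨Jmax, hJmax⟩ := exists_J_le L T μ γ B
  refine ⟨(A / μ + T * (2 * γ ^ 2 / μ ^ 3) * A * (M + T * P ^ 2)) / (μ / Jmax), fun S hS => ?_⟩
  obtain ⟨N, hN, hGN, hNM⟩ := hM S hS
  have hμ := S.μ_pos
  have hT := S.T_pos
  have hT_mem : T ∈ Icc 0 T := right_mem_Icc.2 hT.le
  have hJmax₀ : 0 < Jmax := (S.J_pos 0 T).trans_le
    (hJmax S hS 0 (left_mem_Icc.2 S.L_pos.le) T hT_mem)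
  have hX : ∀ t ∈ Icc 0 T, S.fluxEnergy t ≤ A := fun t ht => S.fluxEnergy_le ht.1 (hA S hS t ht)
  have hA₀ : 0 ≤ A := (S.fluxEnergy_nonneg T).trans (hX T hT_mem)
  rw [le_div_iff₀' (by positivity)]
  refine (S.integral_mul_integral_vty_sq_le hN hGN (hP S hS) (hJmax S hS) hX).trans ?_
  gcongr
  exacts [S.integral_dissipation_le (hA S hS T hT_mem), hNM T hT_mem]

end ExtendedSolution

section ClassicalSolutions

variable {L T μ γ : ℝ} {ρ₀ : ℝ → ℝ} {J v π Jt vy vt w πy πt vty : ℝ → ℝ → ℝ}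

/-- The `ExtendedSolution` obtained from a classical solution by extending all functions
constantly beyond `[0, L] × [0, T]`. -/
noncomputable def ClassicalSolution.extend
    (S : ClassicalSolution L T μ γ ρ₀ J v π Jt vy vt w πy πt)
    (hL : 0 < L) (hT : 0 < T) (hμ : 0 < μ) (hγ : 1 < γ) (hρ_cont : ContinuousOn ρ₀ (Icc 0 L))
    (hρ_nonneg : ∀ y ∈ Icc 0 L, 0 ≤ ρ₀ y)
    (hvty : ∀ y ∈ Icc 0 L, ∀ t ∈ Icc 0 T,
      HasDerivWithinAt (fun x => vt x t) (vty y t) (Icc 0 L) y)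
    (hvty_cont : ContinuousOn (fun p : ℝ × ℝ => vty p.1 p.2) (Icc 0 L ×ˢ Icc 0 T))
    (hv : ∀ t ∈ Icc 0 T, v 0 t = 0 ∧ v L t = 0) (hπ : ∀ y ∈ Icc 0 L, 0 ≤ π y 0) :
    ExtendedSolution L T μ γ where
  ρ := IccExtend hL.le (domRestrict (Icc 0 L) ρ₀)
  J := rectExtend hL.le hT.le J
  v := rectExtend hL.le hT.le v
  π := rectExtend hL.le hT.le π
  vy := rectExtend hL.le hT.le vy
  vt := rectExtend hL.le hT.le vt
  vty := rectExtend hL.le hT.le vty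
  L_pos := hL
  T_pos := hT
  μ_pos := hμ
  one_lt_γ := hγ
  continuous_ρ := hρ_cont.domRestrict.Icc_extend'
  continuous_J := continuous_rectExtend hL.le hT.le S.contJ
  continuous_v := continuous_rectExtend hL.le hT.le S.contv
  continuous_π := continuous_rectExtend hL.le hT.le S.contPi
  continuous_vy := continuous_rectExtend hL.le hT.le S.contvy
  continuous_vt := continuous_rectExtend hL.le hT.le S.contvt
  continuous_vty := continuous_rectExtend hL.le hT.le hvty_cont
  ρ_nonneg y := hρ_nonneg _ (Subtype.coe_prop _)
  J_pos y t := S.Jpos _ (Subtype.coe_prop _) _ (Subtype.coe_prop _)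
  π_zero_nonneg y hy := by
    simpa only [rectExtend_of_mem hL.le hT.le hy (left_mem_Icc.2 hT.le)] using hπ y hy
  hasDerivAt_J y hy t ht := hasDerivAt_rectExtend_snd hL.le hT.le
    (fun y hy t ht => S.eq1 y hy t ht ▸ S.hJt y hy t ht) hy ht
  hasDerivAt_v y hy t ht := hasDerivAt_rectExtend_snd hL.le hT.le S.hvt hy ht
  hasDerivAt_π' y hy t ht :=
    hasDerivAt_rectExtend_snd hL.le hT.le
      (g' := fun y t => μ * (γ - 1) * (vy y t / J y t) ^ 2 - γ * (vy y t / J y t) * π y t)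
      (fun y hy t ht => eq_sub_of_add_eq (S.eq3 y hy t ht) ▸ S.hPit y hy t ht) hy ht
  hasDerivAt_v_space y hy t ht := hasDerivAt_rectExtend_fst hL.le hT.le S.hvy hy ht
  hasDerivAt_vt_space y hy t ht := hasDerivAt_rectExtend_fst hL.le hT.le hvty hy ht
  hasDerivAt_flux y hy t ht :=
    hasDerivAt_rectExtend_fst hL.le hT.le (g := fun y t => μ * (vy y t / J y t) - π y t)
      (g' := fun y t => ρ₀ y * vt y t)
      (fun y hy t ht => (((S.hw y hy t ht).const_mul μ).sub (S.hPiy y hy t ht)).congr_deriv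
        (by linarith [S.eq2 y hy t ht])) hy ht
  v_left t ht := by
    simpa only [rectExtend_of_mem hL.le hT.le (left_mem_Icc.2 hL.le) ht] using (hv t ht).1
  v_right t ht := by
    simpa only [rectExtend_of_mem hL.le hT.le (right_mem_Icc.2 hL.le) ht] using (hv t ht).2

theorem time_weighted_estimate_general
    (L γ μ ρbar Jlow Jbar P₀ E₀ K₀ T : ℝ) (hL : 0 < L) (hγ : 1 < γ) (hμ : 0 < μ)
    (hJlow : 0 < Jlow) (hT : 0 < T) :
    ∃ C > 0, ∀ (ρ₀ : ℝ → ℝ) (J v π Jt vy vt w πy πt vty : ℝ → ℝ → ℝ),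
      ContinuousOn ρ₀ (Icc 0 L) →
      (∀ y ∈ Icc 0 L, 0 ≤ ρ₀ y ∧ ρ₀ y ≤ ρbar) →
      ClassicalSolution L T μ γ ρ₀ J v π Jt vy vt w πy πt →
      (∀ y ∈ Icc 0 L, ∀ t ∈ Icc 0 T,
        HasDerivWithinAt (fun x => vt x t) (vty y t) (Icc 0 L) y) →
      ContinuousOn (fun p : ℝ × ℝ => vty p.1 p.2) (Icc 0 L ×ˢ Icc 0 T) →
      (∀ t ∈ Icc 0 T, v 0 t = 0 ∧ v L t = 0) →
      (∀ y ∈ Icc 0 L, 0 ≤ π y 0) →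
      sSup ((fun y => |π y 0|) '' Icc 0 L) ≤ P₀ →
      (∀ y ∈ Icc 0 L, Jlow ≤ J y 0 ∧ J y 0 ≤ Jbar) →
      (∫ y in 0..L, (ρ₀ y * (v y 0) ^ 2 / 2 + J y 0 * π y 0 / (γ - 1))) ≤ E₀ →
      Real.sqrt (∫ y in 0..L, (μ * vy y 0 / J y 0 - π y 0) ^ 2) ≤ K₀ →
      (∫ t in 0..T, t * ∫ y in 0..L, (vty y t) ^ 2) ≤ C := by
  obtain ⟨C, hC⟩ := ExtendedSolution.exists_integral_mul_integral_vty_sq_le L T μ γ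
    ⟨ρbar, Jlow, Jbar, P₀, E₀, K₀, hJlow⟩
  refine ⟨max C 1, by positivity, fun ρ₀ J v π Jt vy vt w πy πt vty hρ_cont hρ S hvty hvty_cont
    hv hπ hP hJ hE hK => le_max_of_le_left ?_⟩
  have hext : ∀ {f : ℝ → ℝ → ℝ}, ∀ y ∈ Icc 0 L, ∀ t ∈ Icc 0 T,
      rectExtend hL.le hT.le f y t = f y t := fun y hy t ht => rectExtend_of_mem _ _ hy ht
  have hext₀ : ∀ {f : ℝ → ℝ → ℝ}, ∀ y ∈ Icc 0 L, rectExtend hL.le hT.le f y 0 = f y 0 :=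
    fun y hy => hext y hy 0 (left_mem_Icc.2 hT.le)
  have hρ_ext : ∀ y ∈ Icc 0 L, IccExtend hL.le (domRestrict (Icc 0 L) ρ₀) y = ρ₀ y :=
    fun y hy => IccExtend_of_mem hL.le _ hy
  have hπ_cont : ContinuousOn (fun y => π y 0) (Icc 0 L) :=
    fun y hy => (S.hPiy y hy 0 (left_mem_Icc.2 hT.le)).continuousWithinAt
  have hπ_le : ∀ y ∈ Icc 0 L, π y 0 ≤ P₀ := fun _ => le_of_sSup_abs_le isCompact_Icc hπ_cont hP
  have hbound := hC
    (S.extend hL hT hμ hγ hρ_cont (fun y hy => (hρ y hy).1) hvty hvty_cont hv hπ)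
    { ρ_le := fun y hy => (hρ_ext y hy).trans_le (hρ y hy).2
      le_J_zero := fun y hy => (hJ y hy).1.trans_eq (hext₀ y hy).symm
      J_zero_le := fun y hy => (hext₀ y hy).trans_le (hJ y hy).2
      π_zero_le := fun y hy => (hext₀ y hy).trans_le (hπ_le y hy)
      energy_zero_le := (integral_congr_Icc hL.le fun y hy => by
        simp only [ClassicalSolution.extend, hext₀ y hy, hρ_ext y hy]).trans_le hE
      integral_G_zero_sq_le := (integral_congr_Icc hL.le fun y hy => by
        simp only [ExtendedSolution.G, ClassicalSolution.extend, hext₀ y hy,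
          mul_div_assoc]).trans_le (Real.sqrt_le_iff.1 hK).2 }
  refine (integral_congr_Icc hT.le fun t ht => ?_).trans_le hbound
  rw [integral_congr_Icc hL.le fun y hy => ?_]
  exact congrArg (· ^ 2) (hext y hy t ht).symm

end ClassicalSolutions

end Solution

/-- (Proposition 2.8: time-weighted estimate
`∫₀ᵀ t ‖∂_y ∂ₜ v‖₂² dt ≤ C`.) The constant `C` depends only on
`γ, μ, ρ̄, ℓ₀, J̲, J̄, m₀, ‖π₀‖_∞, E₀, ‖G₀‖₂, ‖∂_y J₀‖₂ + ‖∂_y π₀‖₂` and `T`.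
Here `vty = ∂_y ∂ₜ v`. -/
theorem time_weighted_estimate
    (L γ μ ρbar ℓ₀ Jlow Jbar m₀ P₀ E₀ K₀ D₀ T : ℝ)
    (hL : 0 < L) (hγ : 1 < γ) (hμ : 0 < μ) (hρbar : 0 < ρbar) (hℓ₀ : 0 < ℓ₀)
    (hJlow : 0 < Jlow) (hJbar : 0 < Jbar) (hm₀ : 0 ≤ m₀) (hP₀ : 0 ≤ P₀)
    (hE₀ : 0 ≤ E₀) (hK₀ : 0 ≤ K₀) (hD₀ : 0 ≤ D₀) (hT : 0 < T) :
    ∃ C > 0, ∀ (ρ₀ ρ₀d : ℝ → ℝ) (J v π Jt vy vt w πy πt Jy vty : ℝ → ℝ → ℝ),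
      (∀ y ∈ Icc (0:ℝ) L, HasDerivWithinAt ρ₀ (ρ₀d y) (Icc 0 L) y) →
      ContinuousOn ρ₀d (Icc 0 L) →
      (∀ y ∈ Icc (0:ℝ) L, 0 < ρ₀ y ∧ ρ₀ y ≤ ρbar) →
      ClassicalSolution L T μ γ ρ₀ J v π Jt vy vt w πy πt →
      (∀ y ∈ Icc (0:ℝ) L, ∀ t ∈ Icc (0:ℝ) T,
        HasDerivWithinAt (fun x => J x t) (Jy y t) (Icc 0 L) y) →
      (∀ y ∈ Icc (0:ℝ) L, ∀ t ∈ Icc (0:ℝ) T,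
        HasDerivWithinAt (fun x => vt x t) (vty y t) (Icc 0 L) y) →
      ContinuousOn (fun p : ℝ × ℝ => Jy p.1 p.2) (Icc 0 L ×ˢ Icc 0 T) →
      ContinuousOn (fun p : ℝ × ℝ => vty p.1 p.2) (Icc 0 L ×ˢ Icc 0 T) →
      (∀ t ∈ Icc (0:ℝ) T, v 0 t = 0 ∧ v L t = 0) →
      (∀ y ∈ Icc (0:ℝ) L, 0 ≤ π y 0) →
      sSup ((fun y => |π y 0|) '' Icc (0:ℝ) L) ≤ P₀ →
      (∀ y ∈ Icc (0:ℝ) L, Jlow ≤ J y 0 ∧ J y 0 ≤ Jbar) →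
      (∫ y in (0:ℝ)..L, J y 0) = ℓ₀ →
      (∫ y in (0:ℝ)..L, ρ₀ y) = m₀ →
      (∫ y in (0:ℝ)..L, (ρ₀ y * (v y 0) ^ 2 / 2 + J y 0 * π y 0 / (γ - 1))) = E₀ →
      Real.sqrt (∫ y in (0:ℝ)..L, (μ * vy y 0 / J y 0 - π y 0) ^ 2) ≤ K₀ →
      Real.sqrt (∫ y in (0:ℝ)..L, (Jy y 0) ^ 2)
          + Real.sqrt (∫ y in (0:ℝ)..L, (πy y 0) ^ 2) ≤ D₀ →
      (∫ t in (0:ℝ)..T, t * ∫ y in (0:ℝ)..L, (vty y t) ^ 2) ≤ C := by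
  obtain ⟨C, hC, hbound⟩ :=
    time_weighted_estimate_general L γ μ ρbar Jlow Jbar P₀ E₀ K₀ T hL hγ hμ hJlow hT
  exact ⟨C, hC, fun ρ₀ _ J v π Jt vy vt w πy πt _ vty hρ_deriv _ hρ S _ hvty _ hvty_cont hv hπ hP
    hJ _ _ hE hK _ => hbound ρ₀ J v π Jt vy vt w πy πt vty
      (fun y hy => (hρ_deriv y hy).continuousWithinAt) (fun y hy => ⟨(hρ y hy).1.le, (hρ y hy).2⟩)
      S hvty hvty_cont hv hπ hP hJ hE.le hK⟩
end

section
/- Let L > 0, T > 0, μ > 0, γ > 1, and let ρ₀ : [0,L] → ℝ be continuous with ρ₀ ≥ 0. Let (J₁, v₁, π₁) and (J₂, v₂, π₂) be two classical solutions of (E1)–(E3) on [0,L]×[0,T], each continuously differentiable to the required order with continuous derivatives on [0,L]×[0,T] and with J₁ > 0, J₂ > 0 everywhere, satisfying the same boundary condition vᵢ(0,t) = vᵢ(L,t) = 0 for all t ∈ [0,T] (i = 1,2) and the same initial data: J₁(·,0) = J₂(·,0), v₁(·,0) = v₂(·,0), π₁(·,0) = π₂(·,0) on [0,L]. Then (J₁,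 v₁, π₁) = (J₂, v₂, π₂) on [0,L]×[0,T]. -/
open Set MeasureTheory

/-!
The energy `E(t) = ½ ∫ ρ₀ (v₁ - v₂)² + (J₁ - J₂)² + (π₁ - π₂)²` of the difference of two solutions
satisfies `E' ≤ K E`, hence vanishes by Grönwall's inequality. Indeed, writing (E2) as
`ρ₀ ∂_t v = ∂_y G` with the effective viscous flux `G = μ (∂_y v) / J - π` and integrating by
parts, the boundary condition leaves a dissipation term `-μ J₁ (A₁ - A₂)²` in the strain rates
`Aᵢ = ∂_y vᵢ / Jᵢ`, which absorbs every other occurrence of `A₁ - A₂`; the rest is quadratic in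
`(J₁ - J₂, π₁ - π₂)` with bounded coefficients. Where `ρ₀ = 0` the energy does not see the
velocity, but `J₁ = J₂` gives `∂_y v₁ = ∂_y v₂` by (E1), and so `v₁ = v₂` from the boundary values.
-/

section ParametricIntegral

variable {X E : Type*} [TopologicalSpace X] [NormedAddCommGroup E] [NormedSpace ℝ E]

theorem continuousOn_intervalIntegral_of_continuousOn_prod {f : X → ℝ → E} {s : Set X} {a b : ℝ}
    (hf : ContinuousOn f.uncurry (s ×ˢ uIcc a b)) :
    ContinuousOn (fun x => ∫ y in a..b, f x y) s := by
  have hext : Continuous fun p : s × ℝ => f p.1 (projIcc (a ⊓ b) (a ⊔ b) inf_le_sup p.2) :=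
    hf.comp_continuous (f := fun p : s × ℝ => (p.1.1, (projIcc _ _ inf_le_sup p.2).1))
      (by fun_prop) fun p => ⟨p.1.2, Subtype.property _⟩
  rw [continuousOn_iff_continuous_domRestrict]
  refine (intervalIntegral.continuous_parametric_intervalIntegral_of_continuous'
    (μ := volume) (f := fun (x : s) y => f x (projIcc _ _ inf_le_sup y)) hext a b).congr
    fun x => ?_
  refine intervalIntegral.integral_congr fun y hy => ?_
  simp only [projIcc_of_mem inf_le_sup hy]

variable [CompleteSpace E]

theorem intervalIntegral_eq_sub_of_hasDerivWithinAt_Icc {f f' : ℝ → E} {c d t : ℝ}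
    (hderiv : ∀ s ∈ Icc c d, HasDerivWithinAt f (f' s) (Icc c d) s)
    (hf' : ContinuousOn f' (Icc c d)) (ht : t ∈ Icc c d) :
    ∫ s in c..t, f' s = f t - f c := by
  have hsub : Icc c t ⊆ Icc c d := Icc_subset_Icc_right ht.2
  refine intervalIntegral.integral_eq_sub_of_hasDerivAt_of_le ht.1
    (fun s hs => ((hderiv s (hsub hs)).mono hsub).continuousWithinAt) (fun s hs => ?_)
    ((hf'.mono hsub).intervalIntegrable_of_Icc ht.1)
  exact (hderiv s (hsub (Ioo_subset_Icc_self hs))).hasDerivAt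
    (Icc_mem_nhds hs.1 (hs.2.trans_le ht.2))

theorem continuousOn_slice_of_continuousOn_deriv {F F' : X → ℝ → E} {s : Set X} {c d t : ℝ}
    (hF' : ContinuousOn F'.uncurry (s ×ˢ Icc c d))
    (hderiv : ∀ x ∈ s, ∀ t ∈ Icc c d, HasDerivWithinAt (F x) (F' x t) (Icc c d) t)
    (hinit : ContinuousOn (fun x => F x c) s) (ht : t ∈ Icc c d) :
    ContinuousOn (fun x => F x t) s := by
  have hsub : uIcc c t ⊆ Icc c d := uIcc_of_le ht.1 ▸ Icc_subset_Icc_right ht.2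
  refine (hinit.add (continuousOn_intervalIntegral_of_continuousOn_prod
    (hF'.mono (prod_mono_right hsub)))).congr fun x hx => ?_
  rw [Pi.add_apply, intervalIntegral_eq_sub_of_hasDerivWithinAt_Icc (hderiv x hx)
    (hF'.uncurry_left x hx) ht, add_sub_cancel]

theorem hasDerivWithinAt_intervalIntegral {F F' : ℝ → ℝ → E} {a b c d t : ℝ}
    (hF' : ContinuousOn F'.uncurry (uIcc a b ×ˢ Icc c d))
    (hderiv : ∀ y ∈ uIcc a b, ∀ t ∈ Icc c d, HasDerivWithinAt (F y) (F' y t) (Icc c d) t)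
    (hinit : ContinuousOn (fun y => F y c) (uIcc a b)) (ht : t ∈ Icc c d) :
    HasDerivWithinAt (fun t => ∫ y in a..b, F y t) (∫ y in a..b, F' y t) (Icc c d) t := by
  have hrate : ContinuousOn (fun t => ∫ y in a..b, F' y t) (Icc c d) :=
    continuousOn_intervalIntegral_of_continuousOn_prod (f := fun t y => F' y t)
      (hF'.comp continuous_swap.continuousOn fun p hp => ⟨hp.2, hp.1⟩)
  have hprimitive : ∀ t ∈ Icc c d, ∫ y in a..b, F y t =
      (∫ s in c..t, ∫ y in a..b, F' y s) + ∫ y in a..b, F y c := fun t ht => by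
    have hsub : uIcc c t ⊆ Icc c d := uIcc_of_le ht.1 ▸ Icc_subset_Icc_right ht.2
    have hint : IntegrableOn F'.uncurry (uIoc a b ×ˢ uIoc c t) :=
      ((hF'.mono (prod_mono_right hsub)).integrableOn_compact
        (isCompact_uIcc.prod isCompact_uIcc)).mono_set
        (prod_mono uIoc_subset_uIcc uIoc_subset_uIcc)
    have hslice := continuousOn_slice_of_continuousOn_deriv hF' hderiv hinit ht
    rw [← intervalIntegral_intervalIntegral_swap hint, ← sub_eq_iff_eq_add,
      ← intervalIntegral.integral_sub hslice.intervalIntegrable hinit.intervalIntegrable]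
    exact intervalIntegral.integral_congr fun y hy =>
      (intervalIntegral_eq_sub_of_hasDerivWithinAt_Icc (hderiv y hy)
        (hF'.uncurry_left y hy) ht).symm
  have : Fact (t ∈ Icc c d) := ⟨ht⟩
  refine ((intervalIntegral.integral_hasDerivWithinAt_right
    ((hrate.mono (Icc_subset_Icc_right ht.2)).intervalIntegrable_of_Icc ht.1)
    (hrate.stronglyMeasurableAtFilter_nhdsWithin measurableSet_Icc t)
    (hrate t ht)).add_const _).congr hprimitive (hprimitive t ht)

end ParametricIntegral

section Gronwall

theorem nonpos_of_hasDerivWithinAt_le_mul {f f' : ℝ → ℝ} {K c d : ℝ}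
    (hderiv : ∀ t ∈ Icc c d, HasDerivWithinAt f (f' t) (Icc c d) t)
    (hinit : f c ≤ 0) (hbound : ∀ t ∈ Icc c d, f' t ≤ K * f t) :
    ∀ t ∈ Icc c d, f t ≤ 0 := fun t ht => by
  have hright : ∀ t ∈ Ico c d, HasDerivWithinAt f (f' t) (Ici t) t := fun t ht =>
    (hderiv t (Ico_subset_Icc_self ht)).mono_of_mem_nhdsWithin (Icc_mem_nhdsGE_of_mem ht)
  simpa only [gronwallBound_ε0_δ0] using le_gronwallBound_of_liminf_deriv_right_le
    (K := K) (ε := 0) (fun t ht => (hderiv t ht).continuousWithinAt)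
    (fun t ht _ => (hright t ht).liminf_right_slope_le) hinit
    (fun t ht => by simpa only [add_zero] using hbound t (Ico_subset_Icc_self ht)) t ht

theorem eq_zero_of_integral_deriv_le_mul_integral {F F' : ℝ → ℝ → ℝ} {K a b c d : ℝ} (hab : a < b)
    (hF' : ContinuousOn F'.uncurry (Icc a b ×ˢ Icc c d))
    (hderiv : ∀ y ∈ Icc a b, ∀ t ∈ Icc c d, HasDerivWithinAt (F y) (F' y t) (Icc c d) t)
    (hnonneg : ∀ y ∈ Icc a b, ∀ t ∈ Icc c d, 0 ≤ F y t) (hinit : ∀ y ∈ Icc a b, F y c = 0)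
    (hbound : ∀ t ∈ Icc c d, ∫ y in a..b, F' y t ≤ K * ∫ y in a..b, F y t) :
    ∀ y ∈ Icc a b, ∀ t ∈ Icc c d, F y t = 0 := fun y hy t ht => by
  have hinit_cont : ContinuousOn (fun y => F y c) (Icc a b) := continuousOn_const.congr hinit
  have hintegral_nonpos : ∫ y in a..b, F y t ≤ 0 := by
    rw [← uIcc_of_le hab.le] at hF' hderiv hinit_cont hinit
    refine nonpos_of_hasDerivWithinAt_le_mul
      (fun t ht => hasDerivWithinAt_intervalIntegral hF' hderiv hinit_cont ht) ?_ hbound t ht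
    rw [intervalIntegral.integral_congr hinit, intervalIntegral.integral_zero]
  by_contra hne
  have hslice := continuousOn_slice_of_continuousOn_deriv hF' hderiv hinit_cont ht
  exact hintegral_nonpos.not_gt <| intervalIntegral.integral_pos hab hslice
    (fun x hx => hnonneg x (Ioc_subset_Icc_self hx) t ht)
    ⟨y, hy, (hnonneg y hy t ht).lt_of_ne' hne⟩

end Gronwall

section Energy

/-- The density of the weighted `L²` energy of a perturbation `(j, u, p)` of `(J, v, π)`. -/
noncomputable def energyDensity (ρ₀ : ℝ → ℝ) (j u p : ℝ → ℝ → ℝ) (y t : ℝ) : ℝ :=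
  (ρ₀ y * u y t ^ 2 + j y t ^ 2 + p y t ^ 2) / 2

/-- The time derivative of `energyDensity ρ₀ j u p`, where `jt`, `ut`, `pt` stand for the time
derivatives of `j`, `u`, `p`. -/
def energyDensityDeriv (ρ₀ : ℝ → ℝ) (j u p jt ut pt : ℝ → ℝ → ℝ) (y t : ℝ) : ℝ :=
  u y t * (ρ₀ y * ut y t) + j y t * jt y t + p y t * pt y t

variable {ρ₀ : ℝ → ℝ} {j u p jt ut pt : ℝ → ℝ → ℝ} {y t : ℝ}

theorem energyDensity_nonneg (hρ₀ : 0 ≤ ρ₀ y) : 0 ≤ energyDensity ρ₀ j u p y t := by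
  unfold energyDensity
  positivity

theorem sq_add_sq_le_two_mul_energyDensity (hρ₀ : 0 ≤ ρ₀ y) :
    j y t ^ 2 + p y t ^ 2 ≤ 2 * energyDensity ρ₀ j u p y t := by
  unfold energyDensity
  linarith [mul_nonneg hρ₀ (sq_nonneg (u y t))]

theorem eq_zero_of_energyDensity_eq_zero (hρ₀ : 0 ≤ ρ₀ y) (hE : energyDensity ρ₀ j u p y t = 0) :
    j y t = 0 ∧ p y t = 0 := by
  have hsq : j y t ^ 2 + p y t ^ 2 ≤ 0 := by
    simpa only [hE, mul_zero] using
      sq_add_sq_le_two_mul_energyDensity (j := j) (u := u) (p := p) (t := t) hρ₀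
  constructor <;> nlinarith

theorem hasDerivWithinAt_energyDensity {s : Set ℝ} (hj : HasDerivWithinAt (j y) (jt y t) s t)
    (hu : HasDerivWithinAt (u y) (ut y t) s t) (hp : HasDerivWithinAt (p y) (pt y t) s t) :
    HasDerivWithinAt (energyDensity ρ₀ j u p y) (energyDensityDeriv ρ₀ j u p jt ut pt y t) s t := by
  refine (((((hu.pow 2).const_mul (ρ₀ y)).add (hj.pow 2)).add
    (hp.pow 2)).div_const 2).congr_deriv ?_
  simp only [energyDensityDeriv, Nat.cast_ofNat, Nat.add_one_sub_one, pow_one]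
  ring

end Energy

section PointwiseEstimate

/-- The rate at which the energy of the difference of two solutions can grow. The fraction comes
from Young's inequality against the viscous dissipation `μ j (A₁ - A₂) ^ 2`. Here `j` and `p` are
the values of `J₁` and `π₁`, and `A₁`, `A₂` those of the strain rates `∂_y vᵢ / Jᵢ`. -/
noncomputable def growthRate (μ γ j A₁ A₂ p : ℝ) : ℝ :=
  ((j - μ * A₂) ^ 2 + (j + μ * (γ - 1) * (A₁ + A₂) - γ * p) ^ 2) / (4 * (μ * j))
    + |A₂| * (2 + |γ|)

theorem growthRate_nonneg {μ γ j A₁ A₂ p : ℝ} (hμ : 0 < μ) (hj : 0 < j) :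
    0 ≤ growthRate μ γ j A₁ A₂ p := by
  unfold growthRate
  positivity

theorem mul_sub_mul_sq_le_sq_div {m : ℝ} (hm : 0 < m) (a x : ℝ) :
    a * x - m * a ^ 2 ≤ x ^ 2 / (4 * m) := by
  rw [le_div_iff₀ (by positivity)]
  linarith [sq_nonneg (x - 2 * m * a)]

theorem abs_mul_add_sq_sub_mul_sq_le (γ j p : ℝ) :
    |j * p + j ^ 2 - γ * p ^ 2| ≤ (2 + |γ|) * (j ^ 2 + p ^ 2) := by
  have hγj : 0 ≤ |γ| * j ^ 2 := by positivity
  have hγp : |γ * p ^ 2| = |γ| * p ^ 2 := by rw [abs_mul, abs_of_nonneg (sq_nonneg p)]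
  obtain ⟨hlower, hupper⟩ := abs_le.1 hγp.le
  rw [abs_le]
  constructor <;> linarith [sq_nonneg (j + p), sq_nonneg (j - p), sq_nonneg j, sq_nonneg p]

theorem energy_production_le {μ j₁ : ℝ} (hμ : 0 < μ) (hj₁ : 0 < j₁) (γ j₂ A₁ A₂ p₁ p₂ : ℝ) :
    (j₁ - j₂) * (j₁ * A₁ - j₂ * A₂)
      + (p₁ - p₂) * ((μ * (γ - 1) * A₁ ^ 2 - γ * A₁ * p₁)
        - (μ * (γ - 1) * A₂ ^ 2 - γ * A₂ * p₂))
      - (j₁ * A₁ - j₂ * A₂) * ((μ * A₁ - p₁) - (μ * A₂ - p₂))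
    ≤ growthRate μ γ j₁ A₁ A₂ p₁ * ((j₁ - j₂) ^ 2 + (p₁ - p₂) ^ 2) := by
  set j := j₁ - j₂ with hj
  set p := p₁ - p₂ with hp
  set α := j₁ - μ * A₂ with hα
  set β := j₁ + μ * (γ - 1) * (A₁ + A₂) - γ * p₁ with hβ
  have cauchy_schwarz : (α * j + β * p) ^ 2 ≤ (α ^ 2 + β ^ 2) * (j ^ 2 + p ^ 2) := by
    linarith [sq_nonneg (α * p - β * j)]
  calc _ = ((A₁ - A₂) * (α * j + β * p) - μ * j₁ * (A₁ - A₂) ^ 2)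
        + A₂ * (j * p + j ^ 2 - γ * p ^ 2) := by rw [hα, hβ, hj, hp]; ring
    _ ≤ (α * j + β * p) ^ 2 / (4 * (μ * j₁)) + |A₂| * |j * p + j ^ 2 - γ * p ^ 2| := by
        rw [← abs_mul]
        exact add_le_add (mul_sub_mul_sq_le_sq_div (mul_pos hμ hj₁) _ _) (le_abs_self _)
    _ ≤ (α ^ 2 + β ^ 2) * (j ^ 2 + p ^ 2) / (4 * (μ * j₁))
        + |A₂| * ((2 + |γ|) * (j ^ 2 + p ^ 2)) := by
        gcongr
        exact abs_mul_add_sq_sub_mul_sq_le γ j p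
    _ = growthRate μ γ j₁ A₁ A₂ p₁ * (j ^ 2 + p ^ 2) := by rw [growthRate]; ring

end PointwiseEstimate

/-- The effective viscous flux `μ (∂_y v) / J - π`. In terms of it (E2) reads
`ρ₀ ∂_t v = ∂_y (effectiveFlux μ J π vy)`. -/
noncomputable def effectiveFlux (μ : ℝ) (J π vy : ℝ → ℝ → ℝ) (y t : ℝ) : ℝ :=
  μ * (vy y t / J y t) - π y t

namespace ClassicalSolution

section OneSolution

variable {L T μ γ : ℝ} {ρ₀ : ℝ → ℝ} {J v π Jt vy vt w πy πt : ℝ → ℝ → ℝ} {y t : ℝ}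
  (h : ClassicalSolution L T μ γ ρ₀ J v π Jt vy vt w πy πt)

include h

theorem continuousOn_strainRate :
    ContinuousOn (fun p : ℝ × ℝ => vy p.1 p.2 / J p.1 p.2) (Icc 0 L ×ˢ Icc 0 T) :=
  h.contvy.div h.contJ fun p hp => (h.Jpos p.1 hp.1 p.2 hp.2).ne'

theorem continuousOn_density_mul_acceleration :
    ContinuousOn (fun p : ℝ × ℝ => ρ₀ p.1 * vt p.1 p.2) (Icc 0 L ×ˢ Icc 0 T) :=
  ((h.contw.const_mul μ).sub h.contPiy).congr fun p hp => by
    simp only [Pi.sub_apply]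
    linear_combination h.eq2 p.1 hp.1 p.2 hp.2

theorem hasDerivWithinAt_effectiveFlux (hy : y ∈ Icc 0 L) (ht : t ∈ Icc 0 T) :
    HasDerivWithinAt (fun x => effectiveFlux μ J π vy x t) (ρ₀ y * vt y t) (Icc 0 L) y :=
  (((h.hw y hy t ht).const_mul μ).sub (h.hPiy y hy t ht)).congr_deriv <| by
    linear_combination -h.eq2 y hy t ht

theorem J_mul_strainRate (hy : y ∈ Icc 0 L) (ht : t ∈ Icc 0 T) :
    J y t * (vy y t / J y t) = vy y t :=
  mul_div_cancel₀ _ (h.Jpos y hy t ht).ne'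

end OneSolution

section Difference

variable {L T μ γ : ℝ} {ρ₀ : ℝ → ℝ} {J₁ v₁ π₁ Jt₁ vy₁ vt₁ w₁ πy₁ πt₁ : ℝ → ℝ → ℝ}
  {J₂ v₂ π₂ Jt₂ vy₂ vt₂ w₂ πy₂ πt₂ : ℝ → ℝ → ℝ} {y t : ℝ}
  (h₁ : ClassicalSolution L T μ γ ρ₀ J₁ v₁ π₁ Jt₁ vy₁ vt₁ w₁ πy₁ πt₁)
  (h₂ : ClassicalSolution L T μ γ ρ₀ J₂ v₂ π₂ Jt₂ vy₂ vt₂ w₂ πy₂ πt₂)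

include h₁ h₂

theorem exists_growthRate_le (hμ : 0 < μ) :
    ∃ C, ∀ y ∈ Icc 0 L, ∀ t ∈ Icc 0 T,
      growthRate μ γ (J₁ y t) (vy₁ y t / J₁ y t) (vy₂ y t / J₂ y t) (π₁ y t) ≤ C := by
  have hcont : ContinuousOn (fun p : ℝ × ℝ => growthRate μ γ (J₁ p.1 p.2)
      (vy₁ p.1 p.2 / J₁ p.1 p.2) (vy₂ p.1 p.2 / J₂ p.1 p.2) (π₁ p.1 p.2))
      (Icc 0 L ×ˢ Icc 0 T) := by
    have hA₁ := h₁.continuousOn_strainRate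
    have hA₂ := h₂.continuousOn_strainRate
    have hJ₁ := h₁.contJ
    have hπ₁ := h₁.contPi
    unfold growthRate
    refine (ContinuousOn.div (by fun_prop) (by fun_prop) fun p hp => ?_).add (by fun_prop)
    have := h₁.Jpos p.1 hp.1 p.2 hp.2
    positivity
  obtain ⟨C, hC⟩ := (isCompact_Icc.prod isCompact_Icc).exists_bound_of_continuousOn hcont
  exact ⟨C, fun y hy t ht => (le_abs_self _).trans (hC (y, t) ⟨hy, ht⟩)⟩

theorem continuousOn_energyDensityDeriv :
    ContinuousOn (energyDensityDeriv ρ₀ (J₁ - J₂) (v₁ - v₂) (π₁ - π₂) (Jt₁ - Jt₂) (vt₁ - vt₂)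
      (πt₁ - πt₂)).uncurry (Icc 0 L ×ˢ Icc 0 T) := by
  have hmomentum := h₁.continuousOn_density_mul_acceleration.sub
    h₂.continuousOn_density_mul_acceleration
  refine ((((h₁.contv.sub h₂.contv).mul hmomentum).add ((h₁.contJ.sub h₂.contJ).mul
    (h₁.contJt.sub h₂.contJt))).add ((h₁.contPi.sub h₂.contPi).mul
    (h₁.contPit.sub h₂.contPit))).congr fun p _ => ?_
  simp only [Function.uncurry, energyDensityDeriv, Pi.sub_apply, Pi.add_apply, Pi.mul_apply]
  ring

theorem hasDerivWithinAt_energyDensity_sub (hy : y ∈ Icc 0 L) (ht : t ∈ Icc 0 T) :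
    HasDerivWithinAt (energyDensity ρ₀ (J₁ - J₂) (v₁ - v₂) (π₁ - π₂) y)
      (energyDensityDeriv ρ₀ (J₁ - J₂) (v₁ - v₂) (π₁ - π₂) (Jt₁ - Jt₂) (vt₁ - vt₂)
        (πt₁ - πt₂) y t) (Icc 0 T) t :=
  hasDerivWithinAt_energyDensity ((h₁.hJt y hy t ht).sub (h₂.hJt y hy t ht))
    ((h₁.hvt y hy t ht).sub (h₂.hvt y hy t ht)) ((h₁.hPit y hy t ht).sub (h₂.hPit y hy t ht))

theorem energyDensityDeriv_sub_le (hμ : 0 < μ) (hρ₀ : 0 ≤ ρ₀ y) (hy : y ∈ Icc 0 L)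
    (ht : t ∈ Icc 0 T) :
    energyDensityDeriv ρ₀ (J₁ - J₂) (v₁ - v₂) (π₁ - π₂) (Jt₁ - Jt₂) (vt₁ - vt₂) (πt₁ - πt₂) y t
      - ((vy₁ y t - vy₂ y t) * (effectiveFlux μ J₁ π₁ vy₁ y t - effectiveFlux μ J₂ π₂ vy₂ y t)
        + (v₁ y t - v₂ y t) * (ρ₀ y * vt₁ y t - ρ₀ y * vt₂ y t))
    ≤ growthRate μ γ (J₁ y t) (vy₁ y t / J₁ y t) (vy₂ y t / J₂ y t) (π₁ y t)
      * (2 * energyDensity ρ₀ (J₁ - J₂) (v₁ - v₂) (π₁ - π₂) y t) := by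
  have hJ₁ := h₁.Jpos y hy t ht
  have hproduction := energy_production_le hμ hJ₁ γ (J₂ y t) (vy₁ y t / J₁ y t)
    (vy₂ y t / J₂ y t) (π₁ y t) (π₂ y t)
  rw [h₁.J_mul_strainRate hy ht, h₂.J_mul_strainRate hy ht,
    ← eq_sub_of_add_eq (h₁.eq3 y hy t ht), ← eq_sub_of_add_eq (h₂.eq3 y hy t ht)] at hproduction
  refine le_trans (le_of_eq_of_le ?_ hproduction) <| mul_le_mul_of_nonneg_left
    (sq_add_sq_le_two_mul_energyDensity (j := J₁ - J₂) (p := π₁ - π₂) hρ₀)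
    (growthRate_nonneg hμ hJ₁)
  simp only [energyDensityDeriv, effectiveFlux, Pi.sub_apply, h₁.eq1 y hy t ht, h₂.eq1 y hy t ht]
  ring

theorem continuousOn_deriv_velocity_mul_effectiveFlux (ht : t ∈ Icc 0 T) :
    ContinuousOn (fun y => (vy₁ y t - vy₂ y t)
        * (effectiveFlux μ J₁ π₁ vy₁ y t - effectiveFlux μ J₂ π₂ vy₂ y t)
      + (v₁ y t - v₂ y t) * (ρ₀ y * vt₁ y t - ρ₀ y * vt₂ y t)) (Icc 0 L) :=
  (((h₁.contvy.uncurry_right t ht).sub (h₂.contvy.uncurry_right t ht)).mul fun _ hy =>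
    ((h₁.hasDerivWithinAt_effectiveFlux hy ht).sub
      (h₂.hasDerivWithinAt_effectiveFlux hy ht)).continuousWithinAt).add <|
  ((h₁.contv.uncurry_right t ht).sub (h₂.contv.uncurry_right t ht)).mul <|
    (h₁.continuousOn_density_mul_acceleration.uncurry_right (f := fun y t => ρ₀ y * vt₁ y t)
      t ht).sub
    (h₂.continuousOn_density_mul_acceleration.uncurry_right (f := fun y t => ρ₀ y * vt₂ y t) t ht)

theorem integral_deriv_velocity_mul_effectiveFlux_eq_zero (hL : 0 ≤ L) (ht : t ∈ Icc 0 T)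
    (hbc : v₁ 0 t = v₂ 0 t ∧ v₁ L t = v₂ L t) :
    ∫ y in (0:ℝ)..L,
      ((vy₁ y t - vy₂ y t) * (effectiveFlux μ J₁ π₁ vy₁ y t - effectiveFlux μ J₂ π₂ vy₂ y t)
        + (v₁ y t - v₂ y t) * (ρ₀ y * vt₁ y t - ρ₀ y * vt₂ y t)) = 0 := by
  have hderiv : ∀ y ∈ Icc 0 L, HasDerivWithinAt (fun y => (v₁ y t - v₂ y t)
      * (effectiveFlux μ J₁ π₁ vy₁ y t - effectiveFlux μ J₂ π₂ vy₂ y t)) _ (Icc 0 L) y :=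
    fun y hy => ((h₁.hvy y hy t ht).sub (h₂.hvy y hy t ht)).mul
      ((h₁.hasDerivWithinAt_effectiveFlux hy ht).sub (h₂.hasDerivWithinAt_effectiveFlux hy ht))
  refine (intervalIntegral_eq_sub_of_hasDerivWithinAt_Icc hderiv
    (h₁.continuousOn_deriv_velocity_mul_effectiveFlux h₂ ht) (right_mem_Icc.2 hL)).trans ?_
  simp only [hbc.1, hbc.2, sub_self, zero_mul]

theorem integral_energyDensityDeriv_le {C : ℝ} (hL : 0 ≤ L) (hμ : 0 < μ)
    (hρ₀ : ∀ y ∈ Icc 0 L, 0 ≤ ρ₀ y) (ht : t ∈ Icc 0 T)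
    (hbc : v₁ 0 t = v₂ 0 t ∧ v₁ L t = v₂ L t)
    (hslice : ContinuousOn (fun y => energyDensity ρ₀ (J₁ - J₂) (v₁ - v₂) (π₁ - π₂) y t) (Icc 0 L))
    (hC : ∀ y ∈ Icc 0 L,
      growthRate μ γ (J₁ y t) (vy₁ y t / J₁ y t) (vy₂ y t / J₂ y t) (π₁ y t) ≤ C) :
    ∫ y in (0:ℝ)..L, energyDensityDeriv ρ₀ (J₁ - J₂) (v₁ - v₂) (π₁ - π₂) (Jt₁ - Jt₂) (vt₁ - vt₂)
        (πt₁ - πt₂) y t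
      ≤ 2 * C * ∫ y in (0:ℝ)..L, energyDensity ρ₀ (J₁ - J₂) (v₁ - v₂) (π₁ - π₂) y t := by
  have hrate := ((h₁.continuousOn_energyDensityDeriv h₂).uncurry_right t
    ht).intervalIntegrable_of_Icc (μ := volume) hL
  have hflux := (h₁.continuousOn_deriv_velocity_mul_effectiveFlux h₂
    ht).intervalIntegrable_of_Icc (μ := volume) hL
  have hdensity := hslice.intervalIntegrable_of_Icc (μ := volume) hL
  calc _ = ∫ y in (0:ℝ)..L, (energyDensityDeriv ρ₀ (J₁ - J₂) (v₁ - v₂) (π₁ - π₂) (Jt₁ - Jt₂)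
          (vt₁ - vt₂) (πt₁ - πt₂) y t
        - ((vy₁ y t - vy₂ y t) * (effectiveFlux μ J₁ π₁ vy₁ y t - effectiveFlux μ J₂ π₂ vy₂ y t)
          + (v₁ y t - v₂ y t) * (ρ₀ y * vt₁ y t - ρ₀ y * vt₂ y t))) := by
        rw [intervalIntegral.integral_sub hrate hflux,
          h₁.integral_deriv_velocity_mul_effectiveFlux_eq_zero h₂ hL ht hbc, sub_zero]
    _ ≤ ∫ y in (0:ℝ)..L, 2 * C * energyDensity ρ₀ (J₁ - J₂) (v₁ - v₂) (π₁ - π₂) y t := by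
        refine intervalIntegral.integral_mono_on hL (hrate.sub hflux) (hdensity.const_mul _)
          fun y hy => (h₁.energyDensityDeriv_sub_le h₂ hμ (hρ₀ y hy) hy ht).trans ?_
        rw [mul_comm 2 C, mul_assoc]
        exact mul_le_mul_of_nonneg_right (hC y hy)
          (mul_nonneg zero_le_two (energyDensity_nonneg (hρ₀ y hy)))
    _ = _ := intervalIntegral.integral_const_mul _ _

theorem energyDensity_sub_eq_zero (hL : 0 < L) (hμ : 0 < μ) (hρ₀ : ∀ y ∈ Icc 0 L, 0 ≤ ρ₀ y)
    (hbc : ∀ t ∈ Icc 0 T, v₁ 0 t = v₂ 0 t ∧ v₁ L t = v₂ L t)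
    (hinit : ∀ y ∈ Icc 0 L, energyDensity ρ₀ (J₁ - J₂) (v₁ - v₂) (π₁ - π₂) y 0 = 0) :
    ∀ y ∈ Icc 0 L, ∀ t ∈ Icc 0 T,
      energyDensity ρ₀ (J₁ - J₂) (v₁ - v₂) (π₁ - π₂) y t = 0 := by
  obtain ⟨C, hC⟩ := h₁.exists_growthRate_le h₂ hμ
  have hrate := h₁.continuousOn_energyDensityDeriv h₂
  have hderiv := fun y (hy : y ∈ Icc 0 L) t (ht : t ∈ Icc 0 T) =>
    h₁.hasDerivWithinAt_energyDensity_sub h₂ hy ht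
  refine eq_zero_of_integral_deriv_le_mul_integral (K := 2 * C) hL hrate hderiv
    (fun y hy t _ => energyDensity_nonneg (hρ₀ y hy)) hinit fun t ht => ?_
  exact h₁.integral_energyDensityDeriv_le h₂ hL.le hμ hρ₀ ht (hbc t ht)
    (continuousOn_slice_of_continuousOn_deriv hrate hderiv (continuousOn_const.congr hinit) ht)
    fun y hy => hC y hy t ht

theorem velocity_gradient_eq_of_J_eq (hT : 0 < T) (hy : y ∈ Icc 0 L)
    (hJ : ∀ t ∈ Icc 0 T, J₁ y t = J₂ y t) (ht : t ∈ Icc 0 T) : vy₁ y t = vy₂ y t := by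
  rw [← h₁.eq1 y hy t ht, ← h₂.eq1 y hy t ht]
  exact (uniqueDiffOn_Icc hT t ht).eq_deriv _ (h₁.hJt y hy t ht)
    ((h₂.hJt y hy t ht).congr hJ (hJ t ht))

theorem velocity_eq_of_J_eq (hT : 0 < T) (hbc : v₁ 0 t = v₂ 0 t)
    (hJ : ∀ y ∈ Icc 0 L, ∀ t ∈ Icc 0 T, J₁ y t = J₂ y t) (hy : y ∈ Icc 0 L) (ht : t ∈ Icc 0 T) :
    v₁ y t = v₂ y t := by
  refine eq_of_has_deriv_right_eq (f' := fun y => vy₁ y t) (fun x hx => ?_) (fun x hx => ?_)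
    (h₁.contv.uncurry_right t ht) (h₂.contv.uncurry_right t ht) hbc y hy
  · exact (h₁.hvy x (Ico_subset_Icc_self hx) t ht).mono_of_mem_nhdsWithin
      (Icc_mem_nhdsGE_of_mem hx)
  · rw [h₁.velocity_gradient_eq_of_J_eq h₂ hT (Ico_subset_Icc_self hx)
      (hJ x (Ico_subset_Icc_self hx)) ht]
    exact (h₂.hvy x (Ico_subset_Icc_self hx) t ht).mono_of_mem_nhdsWithin
      (Icc_mem_nhdsGE_of_mem hx)

end Difference

end ClassicalSolution

theorem uniqueness_general {L T μ γ : ℝ} {ρ₀ : ℝ → ℝ}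
    {J₁ v₁ π₁ Jt₁ vy₁ vt₁ w₁ πy₁ πt₁ J₂ v₂ π₂ Jt₂ vy₂ vt₂ w₂ πy₂ πt₂ : ℝ → ℝ → ℝ}
    (hL : 0 < L) (hT : 0 < T) (hμ : 0 < μ) (hρ₀ : ∀ y ∈ Icc 0 L, 0 ≤ ρ₀ y)
    (h₁ : ClassicalSolution L T μ γ ρ₀ J₁ v₁ π₁ Jt₁ vy₁ vt₁ w₁ πy₁ πt₁)
    (h₂ : ClassicalSolution L T μ γ ρ₀ J₂ v₂ π₂ Jt₂ vy₂ vt₂ w₂ πy₂ πt₂)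
    (hbc : ∀ t ∈ Icc 0 T, v₁ 0 t = v₂ 0 t ∧ v₁ L t = v₂ L t)
    (hJ0 : ∀ y ∈ Icc 0 L, J₁ y 0 = J₂ y 0)
    (hρv0 : ∀ y ∈ Icc 0 L, ρ₀ y * v₁ y 0 = ρ₀ y * v₂ y 0)
    (hπ0 : ∀ y ∈ Icc 0 L, π₁ y 0 = π₂ y 0) :
    ∀ y ∈ Icc 0 L, ∀ t ∈ Icc 0 T,
      J₁ y t = J₂ y t ∧ v₁ y t = v₂ y t ∧ π₁ y t = π₂ y t := by
  have hinit : ∀ y ∈ Icc 0 L, energyDensity ρ₀ (J₁ - J₂) (v₁ - v₂) (π₁ - π₂) y 0 = 0 :=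
    fun y hy => by
      simp only [energyDensity, Pi.sub_apply, hJ0 y hy, hπ0 y hy]
      linear_combination (v₁ y 0 - v₂ y 0) / 2 * hρv0 y hy
  have hJπ : ∀ y ∈ Icc 0 L, ∀ t ∈ Icc 0 T, J₁ y t - J₂ y t = 0 ∧ π₁ y t - π₂ y t = 0 :=
    fun y hy t ht => eq_zero_of_energyDensity_eq_zero (hρ₀ y hy)
      (h₁.energyDensity_sub_eq_zero h₂ hL hμ hρ₀ hbc hinit y hy t ht)
  have hJ : ∀ y ∈ Icc 0 L, ∀ t ∈ Icc 0 T, J₁ y t = J₂ y t := fun y hy t ht =>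
    sub_eq_zero.1 (hJπ y hy t ht).1
  exact fun y hy t ht => ⟨hJ y hy t ht, h₁.velocity_eq_of_J_eq h₂ hT (hbc t ht).1 hJ hy ht,
    sub_eq_zero.1 (hJπ y hy t ht).2⟩

/-- (Uniqueness part of Theorem 1.1, allowing vacuum `ρ₀ ≥ 0`.) Two
classical solutions of (E1)–(E3) on `[0,L] × [0,T]` with the same homogeneous Dirichlet
boundary condition for the velocity and the same initial data coincide. -/
theorem uniqueness
    (L T μ γ : ℝ) (hL : 0 < L) (hT : 0 < T) (hμ : 0 < μ) (hγ : 1 < γ)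
    (ρ₀ : ℝ → ℝ) (hρ₀ : ContinuousOn ρ₀ (Icc 0 L))
    (hρ₀nonneg : ∀ y ∈ Icc (0:ℝ) L, 0 ≤ ρ₀ y)
    (J₁ v₁ π₁ Jt₁ vy₁ vt₁ w₁ πy₁ πt₁ : ℝ → ℝ → ℝ)
    (J₂ v₂ π₂ Jt₂ vy₂ vt₂ w₂ πy₂ πt₂ : ℝ → ℝ → ℝ)
    (hsol₁ : ClassicalSolution L T μ γ ρ₀ J₁ v₁ π₁ Jt₁ vy₁ vt₁ w₁ πy₁ πt₁)
    (hsol₂ : ClassicalSolution L T μ γ ρ₀ J₂ v₂ π₂ Jt₂ vy₂ vt₂ w₂ πy₂ πt₂)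
    (hbc₁ : ∀ t ∈ Icc (0:ℝ) T, v₁ 0 t = 0 ∧ v₁ L t = 0)
    (hbc₂ : ∀ t ∈ Icc (0:ℝ) T, v₂ 0 t = 0 ∧ v₂ L t = 0)
    (hJ0 : ∀ y ∈ Icc (0:ℝ) L, J₁ y 0 = J₂ y 0)
    (hv0 : ∀ y ∈ Icc (0:ℝ) L, v₁ y 0 = v₂ y 0)
    (hπ0 : ∀ y ∈ Icc (0:ℝ) L, π₁ y 0 = π₂ y 0) :
    ∀ y ∈ Icc (0:ℝ) L, ∀ t ∈ Icc (0:ℝ) T,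
      J₁ y t = J₂ y t ∧ v₁ y t = v₂ y t ∧ π₁ y t = π₂ y t := by
  exact uniqueness_general hL hT hμ hρ₀nonneg hsol₁ hsol₂
    (fun t ht => ⟨(hbc₁ t ht).1.trans (hbc₂ t ht).1.symm, (hbc₁ t ht).2.trans (hbc₂ t ht).2.symm⟩)
    hJ0 (fun y hy => by rw [hv0 y hy]) hπ0
end
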